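/- arXiv:2205.15216 — 2 statements merged into one kernel-verified Lean document; each statement's English description precedes it below -/
import Mathlib

section
/- Let κ : ℝ_{>1} → ℝ_{>1} be a smooth function such that f(x) := x·κ(x) is a smooth increasing function. Suppose that: (a) for every ε > 0 there exists a positive integer N_ε such that for every integer n ≥ N_ε one has max_{x∈[n,2n]} κ'(x) ≤ ε·κ(n), (1−ε)·inf_{x∈(1,2n]} κ(x) ≤ κ(n) ≤ n^ε, and c_𝔪·κ(n) ≤ inf_{x≥n} κ(x) ≤ C_𝔪·κ(n), where C_𝔪 > c_𝔪 > 0 are fixed positive constants; (b) there exist constants 0 < α < 1 and C_α > 1 such that κ(n) ≤ C_α·inf_{x ≥ n^α} κ(x) for all integers n ≥ N_ε. Then for any 1/2 < t < 1 there exists a positive integer N₀ = N₀(t) such that for every integer n₀ ≥ N₀, the squares of sidelength (n·κ(n))^{-t} for n ≥ n₀ can be packed perfectly into a square of area ∑_{n=n₀}^{∞} (n·κ(n))^{-2t}. -/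
open Set MeasureTheory

/-- The axis-parallel square with lower-left corner `c` and sidelength `s`. -/
noncomputable def square (c : ℝ × ℝ) (s : ℝ) : Set (ℝ × ℝ) :=
  Set.Icc c.1 (c.1 + s) ×ˢ Set.Icc c.2 (c.2 + s)

/-- The family of sets `S i` is packed perfectly into `Ω`: the sets are contained in `Ω`,
have pairwise disjoint interiors, and cover `Ω` up to a Lebesgue-null set. -/
def PerfectlyPacked {ι : Type*} (S : ι → Set (ℝ × ℝ)) (Ω : Set (ℝ × ℝ)) : Prop :=
  (∀ i, S i ⊆ Ω) ∧
  (Pairwise fun i j => Disjoint (interior (S i)) (interior (S j))) ∧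
  volume (Ω \ ⋃ i, S i) = 0

/-- A half-open axis-parallel rectangle with lower-left corner `(x, y)`, width `w`, height `h`. -/
structure Box where
  x : ℝ
  y : ℝ
  w : ℝ
  h : ℝ

namespace Box

/-- The underlying half-open set. -/
def toSet (R : Box) : Set (ℝ × ℝ) :=
  Ico R.x (R.x + R.w) ×ˢ Ico R.y (R.y + R.h)

/-- The indicator function of a box. -/
noncomputable def ind (z : ℝ × ℝ) (R : Box) : ℝ := R.toSet.indicator 1 z

/-- The area of a box. -/
def area (R : Box) : ℝ := R.w * R.h

/-- A weighted perimeter of a box, for which thin boxes count little. -/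
noncomputable def weight (δ : ℝ) (R : Box) : ℝ := R.w ^ δ * R.h + R.w * R.h ^ δ

lemma ind_eq (z : ℝ × ℝ) (R : Box) [Decidable (z ∈ R.toSet)] :
    R.ind z = if z ∈ R.toSet then 1 else 0 := by
  classical
  simp [ind, indicator_apply]

lemma ind_nonneg (z : ℝ × ℝ) (R : Box) : 0 ≤ R.ind z := by
  classical
  rw [ind_eq]; split_ifs <;> norm_num

lemma ind_split_width (z : ℝ × ℝ) (x y h : ℝ) {a b : ℝ} (ha : 0 ≤ a) (hb : 0 ≤ b) :
    ind z ⟨x, y, a + b, h⟩ = ind z ⟨x, y, a, h⟩ + ind z ⟨x + a, y, b, h⟩ := by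
  classical
  simp only [ind_eq, toSet, mem_prod, mem_Ico]
  by_cases h1 : z.1 < x + a
  · have h2 : ¬ x + a ≤ z.1 := not_le.mpr h1
    have h3 : z.1 < x + (a + b) := by linarith
    simp [h1, h2, h3]
  · have h2 : x + a ≤ z.1 := not_lt.mp h1
    have h3 : x ≤ z.1 := by linarith
    simp [h1, h2, h3, add_assoc]

lemma ind_split_height (z : ℝ × ℝ) (x y w : ℝ) {a b : ℝ} (ha : 0 ≤ a) (hb : 0 ≤ b) :
    ind z ⟨x, y, w, a + b⟩ = ind z ⟨x, y, w, a⟩ + ind z ⟨x, y + a, w, b⟩ := by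
  classical
  simp only [ind_eq, toSet, mem_prod, mem_Ico]
  by_cases h1 : z.2 < y + a
  · have h2 : ¬ y + a ≤ z.2 := not_le.mpr h1
    have h3 : z.2 < y + (a + b) := by linarith
    simp [h1, h2, h3]
  · have h2 : y + a ≤ z.2 := not_lt.mp h1
    have h3 : y ≤ z.2 := by linarith
    simp [h1, h2, h3, add_assoc]

/-- A strip is cut into a row of squares, the slivers above them and a remainder. -/
lemma ind_row (z : ℝ × ℝ) (u : ℕ → ℝ) (x y w H : ℝ) (L : ℕ)
    (hu : ∀ i < L, 0 ≤ u i ∧ u i ≤ H) (hw : ∑ i ∈ Finset.range L, u i ≤ w) :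
    ind z ⟨x, y, w, H⟩ =
      ∑ i ∈ Finset.range L, ind z ⟨x + ∑ j ∈ Finset.range i, u j, y, u i, u i⟩ +
      ∑ i ∈ Finset.range L,
        ind z ⟨x + ∑ j ∈ Finset.range i, u j, y + u i, u i, H - u i⟩ +
      ind z ⟨x + ∑ j ∈ Finset.range L, u j, y, w - ∑ j ∈ Finset.range L, u j, H⟩ := by
  induction L with
  | zero => simp
  | succ L ih =>
    obtain ⟨h0, hH⟩ := hu L (Nat.lt_succ_self L)
    rw [Finset.sum_range_succ] at hw
    rw [ih (fun i hi => hu i (by omega)) (by linarith), Finset.sum_range_succ,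
      Finset.sum_range_succ, Finset.sum_range_succ]
    have e1 : w - ∑ j ∈ Finset.range L, u j
        = u L + (w - (∑ j ∈ Finset.range L, u j + u L)) := by ring
    have e2 := ind_split_height z (x + ∑ j ∈ Finset.range L, u j) y (u L) h0 (sub_nonneg.mpr hH)
    rw [add_sub_cancel] at e2
    rw [e1, ind_split_width z _ _ _ h0 (by linarith), e2, ← add_assoc x]
    ring

lemma weight_mono {δ : ℝ} (hδ : 0 ≤ δ) (x y x' y' : ℝ) {w w' h h' : ℝ} (hw : 0 ≤ w) (hh : 0 ≤ h)
    (hww : w ≤ w') (hhh : h ≤ h') : weight δ ⟨x, y, w, h⟩ ≤ weight δ ⟨x', y', w', h'⟩ := by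
  simp only [weight]
  have := hw.trans hww
  gcongr

lemma weight_square {δ : ℝ} (x y : ℝ) {a : ℝ} (ha : 0 < a) :
    weight δ ⟨x, y, a, a⟩ = 2 * a ^ (1 + δ) := by
  simp only [weight]
  rw [Real.rpow_add ha, Real.rpow_one]; ring

lemma weight_sliver {δ : ℝ} (hδ1 : δ ≤ 1) (x y : ℝ) {a d d' H : ℝ}
    (hδ : 0 ≤ δ) (ha : 0 < a) (haH : a ≤ H) (hd : 0 ≤ d) (hdd : d ≤ d') (hdH : d ≤ H) :
    weight δ ⟨x, y, a, d⟩ ≤ 2 * H * d' ^ δ := by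
  simp only [weight]
  have hH : 0 < H := ha.trans_le haH
  have h1 : a ^ δ * d ≤ H * d ^ δ := by
    rcases hd.eq_or_lt with rfl | hd
    · have : (0:ℝ) ≤ 0 ^ δ := Real.rpow_nonneg le_rfl _
      rw [mul_zero]; positivity
    · have e1 : d = d ^ (1 - δ) * d ^ δ := by rw [← Real.rpow_add hd]; simp
      have e2 : H = H ^ δ * H ^ (1 - δ) := by rw [← Real.rpow_add hH]; simp
      calc a ^ δ * d = a ^ δ * d ^ (1 - δ) * d ^ δ := by rw [mul_assoc, ← e1]
        _ ≤ H ^ δ * H ^ (1 - δ) * d ^ δ := by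
          have : 0 ≤ 1 - δ := by linarith
          gcongr
        _ = H * d ^ δ := by rw [← e2]
  have h2 : a * d ^ δ ≤ H * d ^ δ := by gcongr
  have h3 : H * d ^ δ ≤ H * d' ^ δ := by gcongr
  linarith

lemma area_le_weight {δ : ℝ} (hδ : δ ≤ 1) {R : Box} {b : ℝ} (hw : 0 ≤ R.w) (hh : 0 ≤ R.h)
    (hb : R.w ≤ b ∨ R.h ≤ b) : R.area ≤ b ^ (1 - δ) * R.weight δ := by
  have key : ∀ u v : ℝ, 0 ≤ u → 0 ≤ v → u ≤ b → u * v ≤ b ^ (1 - δ) * (u ^ δ * v) := by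
    intro u v hu hv hub
    rcases hu.eq_or_lt with rfl | hu
    · have : (0:ℝ) ≤ 0 ^ δ := Real.rpow_nonneg le_rfl _
      rw [zero_mul]; positivity
    · have e1 : u = u ^ (1 - δ) * u ^ δ := by rw [← Real.rpow_add hu]; simp
      calc u * v = u ^ (1 - δ) * (u ^ δ * v) := by rw [← mul_assoc, ← e1]
        _ ≤ _ := by
          have : 0 ≤ 1 - δ := by linarith
          gcongr
  have hb0 : 0 ≤ b := by rcases hb with h | h <;> linarith
  have p1 : 0 ≤ b ^ (1 - δ) * (R.w ^ δ * R.h) := by positivity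
  have p2 : 0 ≤ b ^ (1 - δ) * (R.h ^ δ * R.w) := by positivity
  simp only [area, weight]
  rcases hb with h | h
  · have := key _ _ hw hh h
    linarith
  · have := key _ _ hh hw h
    linarith

/-- If all boxes were thin, the total area would be controlled by the total weight. -/
lemma exists_wide {δ : ℝ} (hδ : δ ≤ 1) {b : ℝ} (S : Multiset Box)
    (hS : ∀ R ∈ S, 0 ≤ R.w ∧ 0 ≤ R.h)
    (h : b ^ (1 - δ) * (S.map (weight δ)).sum < (S.map area).sum) :
    ∃ R ∈ S, b < R.w ∧ b < R.h := by
  by_contra! hcon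
  refine h.not_ge ?_
  rw [← Multiset.sum_map_mul_left]
  refine Multiset.sum_map_le_sum_map _ _ fun R hR => ?_
  obtain ⟨hw, hh⟩ := hS R hR
  refine area_le_weight hδ hw hh ?_
  by_contra! hc
  exact (hcon R hR hc.1).not_gt hc.2

end Box

/-- A stage of the packing algorithm: the squares with index in `[n₀, n)` have been placed at
positions `p`, and the boxes in `S` are still free. -/
structure IsStage (s : ℕ → ℝ) (δ W : ℝ) (A E : ℕ → ℝ) (n₀ n : ℕ) (p : ℕ → ℝ × ℝ)
    (S : Multiset Box) : Prop where
  le : n₀ ≤ n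
  dims : ∀ R ∈ S, 0 ≤ R.w ∧ 0 ≤ R.h ∧ R.w ≤ W
  ind_eq : ∀ z, Box.ind z ⟨0, 0, W, W⟩ =
    ∑ m ∈ Finset.Ico n₀ n, Box.ind z ⟨(p m).1, (p m).2, s m, s m⟩ + (S.map (Box.ind z)).sum
  area_eq : (S.map Box.area).sum = A n
  weight_le : (S.map (Box.weight δ)).sum ≤ E n

lemma IsStage.next {s : ℕ → ℝ} {δ W T : ℝ} {A E : ℕ → ℝ} {n₀ n : ℕ} {p : ℕ → ℝ × ℝ}
    {S : Multiset Box} (hδ : 0 ≤ δ) (hδ1 : δ ≤ 1) (hT : 1 ≤ T)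
    (hpos : ∀ n, n₀ ≤ n → 0 < s n) (hanti : ∀ m n, n₀ ≤ m → m ≤ n → s n ≤ s m)
    (hA : ∀ n, n₀ ≤ n → ∀ L, A n = ∑ i ∈ Finset.range L, s (n + i) ^ 2 + A (n + L))
    (hE : ∀ n, n₀ ≤ n → (T * s n) ^ (1 - δ) * E n < A n)
    (hstep : ∀ n, n₀ ≤ n → ∀ w, T * s n < w → w ≤ W → ∃ L : ℕ, 1 ≤ L ∧
      ∑ i ∈ Finset.range L, s (n + i) ≤ w ∧ w - ∑ i ∈ Finset.range L, s (n + i) ≤ s n ∧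
      E n + 2 * s n ^ (1 + δ) + L * (2 * s n * (s n - s (n + L)) ^ δ) ≤ E (n + L))
    (h : IsStage s δ W A E n₀ n p S) :
    ∃ n' p' S', IsStage s δ W A E n₀ n' p' S' ∧ n < n' ∧ ∀ m < n, p' m = p m := by
  have hsn := hpos n h.le
  have hTs : s n ≤ T * s n := le_mul_of_one_le_left hsn.le hT
  obtain ⟨R, hRS, hRw, hRh⟩ : ∃ R ∈ S, T * s n < R.w ∧ T * s n < R.h := by
    refine Box.exists_wide hδ1 S (fun R hR => ⟨(h.dims R hR).1, (h.dims R hR).2.1⟩) ?_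
    rw [h.area_eq]
    refine lt_of_le_of_lt ?_ (hE n h.le)
    have := h.weight_le
    gcongr
  obtain ⟨S, rfl⟩ := Multiset.exists_cons_of_mem hRS
  obtain ⟨x, y, w, k⟩ := R
  simp only at hRw hRh
  have hwW : w ≤ W := (h.dims _ hRS).2.2
  obtain ⟨L, hL, hle, hrem, hEL⟩ := hstep n h.le w hRw hwW
  set u : ℕ → ℝ := fun i => s (n + i) with hu
  have hu0 : ∀ i, 0 < u i := fun i => hpos _ (h.le.trans (Nat.le_add_right _ _))
  have hun : ∀ i, u i ≤ s n := fun i => hanti _ _ h.le (Nat.le_add_right _ _)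
  let σ : ℕ → ℝ := fun i => ∑ j ∈ Finset.range i, u j
  let sl : ℕ → Box := fun i => ⟨x + σ i, y + u i, u i, s n - u i⟩
  let rem : Box := ⟨x + σ L, y, w - σ L, s n⟩
  let top : Box := ⟨x, y + s n, w, k - s n⟩
  have hk : 0 ≤ k - s n := by linarith
  have hw0 : 0 ≤ w := by linarith
  refine ⟨n + L, fun m => if m < n then p m else (x + σ (m - n), y),
    top ::ₘ rem ::ₘ ((Finset.range L).val.map sl + S), ⟨?_, ?_, ?_, ?_, ?_⟩, by omega, ?_⟩
  · exact h.le.trans (Nat.le_add_right _ _)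
  · intro Q hQ
    simp only [Multiset.mem_cons, Multiset.mem_add, Multiset.mem_map] at hQ
    have hσ : 0 ≤ σ L := Finset.sum_nonneg fun i _ => (hu0 i).le
    rcases hQ with rfl | rfl | ⟨i, _, rfl⟩ | hQ
    · exact ⟨hw0, hk, hwW⟩
    · exact ⟨sub_nonneg.mpr hle, hsn.le, by show w - σ L ≤ W; linarith⟩
    · exact ⟨(hu0 i).le, sub_nonneg.mpr (hun i), by
        show u i ≤ W; linarith [hun i]⟩
    · exact h.dims Q (Multiset.mem_cons_of_mem hQ)
  · intro z
    rw [h.ind_eq z, ← Finset.sum_Ico_consecutive _ h.le (Nat.le_add_right n L)]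
    have e1 : ∑ m ∈ Finset.Ico n₀ n, Box.ind z
          ⟨(if m < n then p m else (x + σ (m - n), y)).1,
            (if m < n then p m else (x + σ (m - n), y)).2, s m, s m⟩ =
        ∑ m ∈ Finset.Ico n₀ n, Box.ind z ⟨(p m).1, (p m).2, s m, s m⟩ := by
      refine Finset.sum_congr rfl fun m hm => ?_
      rw [if_pos (Finset.mem_Ico.mp hm).2]
    have e2 : ∑ m ∈ Finset.Ico n (n + L), Box.ind z
          ⟨(if m < n then p m else (x + σ (m - n), y)).1,
            (if m < n then p m else (x + σ (m - n), y)).2, s m, s m⟩ =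
        ∑ i ∈ Finset.range L, Box.ind z ⟨x + σ i, y, u i, u i⟩ := by
      rw [Finset.sum_Ico_eq_sum_range, Nat.add_sub_cancel_left]
      refine Finset.sum_congr rfl fun i _ => ?_
      simp [hu]
    rw [e1, e2]
    have e3 := Box.ind_split_height z x y w hsn.le hk
    rw [add_sub_cancel] at e3
    have e4 := Box.ind_row z u x y w (s n) L (fun i _ => ⟨(hu0 i).le, hun i⟩) hle
    simp only [Multiset.map_cons, Multiset.sum_cons, Multiset.map_add, Multiset.sum_add,
      Multiset.map_map]
    change _ = _ + (Box.ind z top + (Box.ind z rem + (∑ i ∈ Finset.range L, Box.ind z (sl i) + _)))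
    rw [e3, e4]
    ring
  · have e := h.area_eq
    simp only [Multiset.map_cons, Multiset.sum_cons, Multiset.map_add, Multiset.sum_add,
      Multiset.map_map] at e ⊢
    change Box.area top + (Box.area rem + (∑ i ∈ Finset.range L, Box.area (sl i) + _)) = _
    have e1 : ∑ i ∈ Finset.range L, Box.area (sl i)
        = σ L * s n - ∑ i ∈ Finset.range L, s (n + i) ^ 2 := by
      simp only [Box.area, sl, σ, Finset.sum_mul, ← Finset.sum_sub_distrib]
      refine Finset.sum_congr rfl fun i _ => ?_
      simp only [hu]; ring
    rw [hA n h.le L] at e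
    rw [e1]
    simp only [Box.area, top, rem] at e ⊢
    linarith
  · have e := h.weight_le
    simp only [Multiset.map_cons, Multiset.sum_cons, Multiset.map_add, Multiset.sum_add,
      Multiset.map_map] at e ⊢
    change Box.weight δ top +
      (Box.weight δ rem + (∑ i ∈ Finset.range L, Box.weight δ (sl i) + _)) ≤ _
    have w1 : Box.weight δ top ≤ Box.weight δ ⟨x, y, w, k⟩ :=
      Box.weight_mono hδ _ _ _ _ hw0 hk le_rfl (by linarith)
    have w2 : Box.weight δ rem ≤ 2 * s n ^ (1 + δ) := by
      rw [← Box.weight_square 0 0 hsn]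
      exact Box.weight_mono hδ _ _ _ _ (sub_nonneg.mpr hle) hsn.le hrem le_rfl
    have w3 : ∑ i ∈ Finset.range L, Box.weight δ (sl i)
        ≤ L * (2 * s n * (s n - s (n + L)) ^ δ) := by
      rw [← nsmul_eq_mul, ← Finset.card_range L]
      simp only [Finset.card_range]
      refine (Finset.sum_le_card_nsmul _ _ _ fun i hi => ?_).trans_eq
        (by rw [Finset.card_range])
      have hi := Finset.mem_range.mp hi
      have : s (n + L) ≤ u i := hanti _ _ (h.le.trans (Nat.le_add_right _ _)) (by omega)
      exact Box.weight_sliver hδ1 _ _ hδ (hu0 i) (hun i) (sub_nonneg.mpr (hun i))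
        (by linarith) (by linarith [hu0 i])
    linarith
  · intro m hm
    simp [hm]

lemma perfectlyPacked_of_stages {s : ℕ → ℝ} {δ W T : ℝ} {A E : ℕ → ℝ} {n₀ : ℕ}
    (hδ : 0 ≤ δ) (hδ1 : δ ≤ 1) (hT : 1 ≤ T) (hW : 0 < W)
    (hpos : ∀ n, n₀ ≤ n → 0 < s n) (hanti : ∀ m n, n₀ ≤ m → m ≤ n → s n ≤ s m)
    (hA : ∀ n, n₀ ≤ n → ∀ L, A n = ∑ i ∈ Finset.range L, s (n + i) ^ 2 + A (n + L))
    (hsum : HasSum (fun n : {n : ℕ // n₀ ≤ n} => s n ^ 2) (W ^ 2)) (hWA : W ^ 2 = A n₀)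
    (hE₀ : 2 * W ^ (1 + δ) ≤ E n₀)
    (hE : ∀ n, n₀ ≤ n → (T * s n) ^ (1 - δ) * E n < A n)
    (hstep : ∀ n, n₀ ≤ n → ∀ w, T * s n < w → w ≤ W → ∃ L : ℕ, 1 ≤ L ∧
      ∑ i ∈ Finset.range L, s (n + i) ≤ w ∧ w - ∑ i ∈ Finset.range L, s (n + i) ≤ s n ∧
      E n + 2 * s n ^ (1 + δ) + L * (2 * s n * (s n - s (n + L)) ^ δ) ≤ E (n + L)) :
    ∃ pos : {n : ℕ // n₀ ≤ n} → ℝ × ℝ,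
      PerfectlyPacked (fun n : {n : ℕ // n₀ ≤ n} => square (pos n) (s n)) (square (0, 0) W) := by
  classical
  let St := {q : ℕ × (ℕ → ℝ × ℝ) × Multiset Box // IsStage s δ W A E n₀ q.1 q.2.1 q.2.2}
  have hnext : ∀ q : St, ∃ q' : St, q.1.1 < q'.1.1 ∧ ∀ m < q.1.1, q'.1.2.1 m = q.1.2.1 m := by
    rintro ⟨⟨n, p, S⟩, hq⟩
    obtain ⟨n', p', S', h1, h2, h3⟩ := hq.next hδ hδ1 hT hpos hanti hA hE hstep
    exact ⟨⟨⟨n', p', S'⟩, h1⟩, h2, h3⟩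
  choose f hf1 hf2 using hnext
  have h0 : IsStage s δ W A E n₀ n₀ (fun _ => (0, 0)) {⟨0, 0, W, W⟩} := by
    refine ⟨le_rfl, ?_, ?_, ?_, ?_⟩
    · intro R hR
      rw [Multiset.mem_singleton] at hR
      subst hR
      exact ⟨hW.le, hW.le, le_rfl⟩
    · intro z; simp
    · simp [Box.area, ← hWA, sq]
    · simpa [Box.weight_square _ _ hW] using hE₀
  let Q : ℕ → St := fun k => f^[k] ⟨⟨n₀, _, _⟩, h0⟩
  have hQ : ∀ k, Q (k + 1) = f (Q k) := fun k => Function.iterate_succ_apply' _ _ _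
  have hmono : StrictMono fun k => (Q k).1.1 :=
    strictMono_nat_of_lt_succ fun k => by rw [hQ]; exact hf1 _
  have hk : ∀ k, k ≤ (Q k).1.1 := hmono.id_le
  have hstab : ∀ k l m, k ≤ l → m < (Q k).1.1 → (Q l).1.2.1 m = (Q k).1.2.1 m := by
    intro k l m hkl hm
    induction l, hkl using Nat.le_induction with
    | base => rfl
    | succ l hl ih =>
      rw [hQ, hf2 _ _ (hm.trans_le (hmono.monotone hl)), ih]
  let pos : ℕ → ℝ × ℝ := fun m => (Q (m + 1)).1.2.1 m
  have hposQ : ∀ k m, m < k → (Q k).1.2.1 m = pos m := fun k m hm =>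
    hstab (m + 1) k m hm (hk (m + 1))
  let B : ℕ → Box := fun m => ⟨(pos m).1, (pos m).2, s m, s m⟩
  have hind : ∀ z k, ∑ m ∈ Finset.Ico n₀ k, Box.ind z (B m) ≤ Box.ind z ⟨0, 0, W, W⟩ := by
    intro z k
    have hst := (Q k).2
    rw [hst.ind_eq z]
    have h1 : ∑ m ∈ Finset.Ico n₀ k, Box.ind z (B m) =
        ∑ m ∈ Finset.Ico n₀ k,
          Box.ind z ⟨((Q k).1.2.1 m).1, ((Q k).1.2.1 m).2, s m, s m⟩ := by
      refine Finset.sum_congr rfl fun m hm => ?_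
      rw [hposQ k m (Finset.mem_Ico.mp hm).2]
    have h2 := Finset.sum_le_sum_of_subset_of_nonneg
      (f := fun m => Box.ind z ⟨((Q k).1.2.1 m).1, ((Q k).1.2.1 m).2, s m, s m⟩)
      (Finset.Ico_subset_Ico_right (a := n₀) (hk k)) (fun _ _ _ => Box.ind_nonneg _ _)
    have h3 : 0 ≤ ((Q k).1.2.2.map (Box.ind z)).sum := by
      refine Multiset.sum_nonneg fun v hv => ?_
      obtain ⟨R, _, rfl⟩ := Multiset.mem_map.mp hv
      exact Box.ind_nonneg _ _
    linarith
  have hsub : ∀ m, n₀ ≤ m → (B m).toSet ⊆ (Box.mk 0 0 W W).toSet := by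
    intro m hm z hz
    have h1 := hind z (m + 1)
    have h2 : Box.ind z (B m) ≤ ∑ m ∈ Finset.Ico n₀ (m + 1), Box.ind z (B m) :=
      Finset.single_le_sum (f := fun m => Box.ind z (B m)) (fun _ _ => Box.ind_nonneg _ _)
        (Finset.mem_Ico.mpr ⟨hm, Nat.lt_succ_self m⟩)
    by_contra hc
    rw [Box.ind_eq z (Box.mk 0 0 W W), if_neg hc] at h1
    rw [Box.ind_eq z (B m), if_pos hz] at h2
    linarith
  have hdisj : ∀ m n, n₀ ≤ m → n₀ ≤ n → m ≠ n → Disjoint (B m).toSet (B n).toSet := by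
    intro m n hm hn hmn
    rw [Set.disjoint_left]
    intro z hzm hzn
    have h1 := hind z (max m n + 1)
    have h2 : ∑ i ∈ {m, n}, Box.ind z (B i) ≤
        ∑ i ∈ Finset.Ico n₀ (max m n + 1), Box.ind z (B i) := by
      refine Finset.sum_le_sum_of_subset_of_nonneg ?_ fun _ _ _ => Box.ind_nonneg _ _
      intro i hi
      simp only [Finset.mem_insert, Finset.mem_singleton] at hi
      rw [Finset.mem_Ico]
      omega
    rw [Finset.sum_pair hmn, Box.ind_eq z (B m), if_pos hzm, Box.ind_eq z (B n), if_pos hzn] at h2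
    have h3 : Box.ind z ⟨0, 0, W, W⟩ ≤ 1 := by
      rw [Box.ind_eq]; split_ifs <;> norm_num
    linarith
  have hint : ∀ m, interior (square (pos m) (s m)) ⊆ (B m).toSet := by
    intro m
    rw [square, interior_prod_eq, interior_Icc, interior_Icc]
    exact Set.prod_mono Ioo_subset_Ico_self Ioo_subset_Ico_self
  have hBsq : ∀ m, (B m).toSet ⊆ square (pos m) (s m) := fun m =>
    Set.prod_mono Ico_subset_Icc_self Ico_subset_Icc_self
  have hmeas : ∀ R : Box, MeasurableSet R.toSet := fun R => measurableSet_Ico.prod measurableSet_Ico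
  refine ⟨fun n => pos n, ?_, ?_, ?_⟩
  · rintro ⟨m, hm⟩
    have hsm := hpos m hm
    have h1 := closure_mono (hsub m hm)
    simp only [Box.toSet, closure_prod_eq] at h1
    rw [closure_Ico (by simp [B]; exact hsm.ne'), closure_Ico (by simp [B]; exact hsm.ne'),
      closure_Ico (by simp; exact hW.ne)] at h1
    exact h1
  · rintro ⟨m, hm⟩ ⟨n, hn⟩ hmn
    exact (hdisj m n hm hn fun h => hmn (Subtype.ext h)).mono (hint m) (hint n)
  · have hvol : ∀ x y a : ℝ, 0 ≤ a → volume (Box.mk x y a a).toSet = ENNReal.ofReal (a ^ 2) := by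
      intro x y a ha
      rw [Box.toSet, Measure.volume_eq_prod, Measure.prod_prod, Real.volume_Ico, Real.volume_Ico,
        ← ENNReal.ofReal_mul (by simpa using ha)]
      congr 1
      ring
    have hU : volume (⋃ n : {n : ℕ // n₀ ≤ n}, (B n).toSet) = ENNReal.ofReal (W ^ 2) := by
      rw [measure_iUnion (f := fun n : {n : ℕ // n₀ ≤ n} => (B n).toSet) (fun i j hij => hdisj i j i.2 j.2 fun h => hij (Subtype.ext h))
        (fun i => hmeas _), ← hsum.tsum_eq, ENNReal.ofReal_tsum_of_nonneg
        (fun _ => sq_nonneg _) hsum.summable]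
      exact tsum_congr fun n => hvol _ _ _ (hpos n n.2).le
    have hΩ : volume (square (0, 0) W) = ENNReal.ofReal (W ^ 2) := by
      rw [square, Measure.volume_eq_prod, Measure.prod_prod, Real.volume_Icc,
        ← ENNReal.ofReal_mul (by simpa using hW.le)]
      congr 1
      simp; ring
    have hUsub : (⋃ n : {n : ℕ // n₀ ≤ n}, (B n).toSet) ⊆ square (0, 0) W := by
      refine iUnion_subset fun n => (hsub n n.2).trans ?_
      simp only [Box.toSet, square]
      exact Set.prod_mono Ico_subset_Icc_self Ico_subset_Icc_self
    have hd : volume (square (0, 0) W \ ⋃ n : {n : ℕ // n₀ ≤ n}, (B n).toSet) = 0 := by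
      rw [measure_sdiff hUsub (MeasurableSet.iUnion fun n => hmeas _).nullMeasurableSet
        (by rw [hU]; exact ENNReal.ofReal_ne_top), hU, hΩ, tsub_self]
    refine measure_mono_null (sdiff_subset_sdiff_right ?_) hd
    exact iUnion_mono fun n => hBsq n

lemma sum_Ico_rpow_neg_le {p : ℝ} (hp : 0 < p) (hp1 : p < 1) {a n : ℕ} (ha : 1 ≤ a)
    (han : a ≤ n) :
    ∑ m ∈ Finset.Ico a n, (m : ℝ) ^ (-p) ≤ 2 / (1 - p) * (n : ℝ) ^ (1 - p) := by
  have hp' : 0 < 1 - p := by linarith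
  induction n, han using Nat.le_induction with
  | base => simp; positivity
  | succ n han ih =>
    rw [Finset.sum_Ico_succ_top han]
    have hn : (1 : ℝ) ≤ n := by exact_mod_cast ha.trans han
    have hn0 : (0 : ℝ) < n := by linarith
    have hb := rpow_one_add_le_one_add_mul_self (s := -1 / ((n : ℝ) + 1))
      (by rw [le_div_iff₀ (by positivity)]; linarith) hp'.le (by linarith)
    have e1 : 1 + -1 / ((n : ℝ) + 1) = n / (n + 1) := by field_simp; ring
    rw [e1, Real.div_rpow hn0.le (by positivity), div_le_iff₀ (by positivity)] at hb
    have e2 : ((n : ℝ) + 1) ^ (1 - p) = (n + 1) * ((n : ℝ) + 1) ^ (-p) := by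
      rw [sub_eq_add_neg, Real.rpow_add (by positivity), Real.rpow_one]
    have e3 : (1 + (1 - p) * (-1 / ((n : ℝ) + 1))) * ((n : ℝ) + 1) ^ (1 - p)
        = ((n : ℝ) + 1) ^ (1 - p) - (1 - p) * ((n : ℝ) + 1) ^ (-p) := by
      rw [e2]; field_simp; ring
    rw [e3] at hb
    have h2 : (n : ℝ) ^ (-p) ≤ 2 * ((n : ℝ) + 1) ^ (-p) := by
      have h3 : (2 * (n : ℝ)) ^ (-p) ≤ ((n : ℝ) + 1) ^ (-p) :=
        Real.rpow_le_rpow_of_nonpos (by positivity) (by linarith) (by linarith)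
      rw [Real.mul_rpow (by norm_num) hn0.le] at h3
      have h4 : (2 : ℝ)⁻¹ ≤ 2 ^ (-p) := by
        rw [← Real.rpow_neg_one]
        exact Real.rpow_le_rpow_of_exponent_le (by norm_num) (by linarith)
      have h5 : 0 < (n : ℝ) ^ (-p) := by positivity
      nlinarith
    have h6 : (2 : ℝ) * (n + 1) ^ (-p) = 2 / (1 - p) * ((1 - p) * ((n : ℝ) + 1) ^ (-p)) := by
      field_simp
    have h7 : 2 / (1 - p) * ((1 - p) * ((n : ℝ) + 1) ^ (-p)) ≤
        2 / (1 - p) * (((n : ℝ) + 1) ^ (1 - p) - (n : ℝ) ^ (1 - p)) := by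
      gcongr
      linarith
    push_cast
    linarith

/-- A sequence that decays slower than `n ^ (-p)` with `p < 1` has partial sums dominated by
their last terms. -/
lemma sum_Ico_le_of_regular {F : ℕ → ℝ} {K p : ℝ} (hK : 0 ≤ K) (hp : 0 < p) (hp1 : p < 1) {a n : ℕ}
    (ha : 1 ≤ a) (han : a ≤ n) (hFn : 0 ≤ F n)
    (hF : ∀ m, a ≤ m → m ≤ n → F m ≤ K * ((n : ℝ) / m) ^ p * F n) :
    ∑ m ∈ Finset.Ico a n, F m ≤ K * (2 / (1 - p)) * (n * F n) ∧
      a * F a ≤ K * (2 / (1 - p)) * (n * F n) := by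
  have hp' : 0 < 1 - p := by linarith
  have hn0 : (0 : ℝ) < n := by exact_mod_cast ha.trans han
  have ha0 : (0 : ℝ) < a := by exact_mod_cast ha
  constructor
  · calc ∑ m ∈ Finset.Ico a n, F m
        ≤ ∑ m ∈ Finset.Ico a n, K * (n : ℝ) ^ p * F n * (m : ℝ) ^ (-p) := by
          refine Finset.sum_le_sum fun m hm => ?_
          obtain ⟨h1, h2⟩ := Finset.mem_Ico.mp hm
          refine (hF m h1 h2.le).trans_eq ?_
          rw [Real.div_rpow hn0.le (Nat.cast_nonneg m), Real.rpow_neg (Nat.cast_nonneg m)]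
          ring
      _ = K * (n : ℝ) ^ p * F n * ∑ m ∈ Finset.Ico a n, (m : ℝ) ^ (-p) := by
          rw [Finset.mul_sum]
      _ ≤ K * (n : ℝ) ^ p * F n * (2 / (1 - p) * (n : ℝ) ^ (1 - p)) := by
          gcongr
          exact sum_Ico_rpow_neg_le hp hp1 ha han
      _ = K * (2 / (1 - p)) * ((n : ℝ) ^ p * (n : ℝ) ^ (1 - p) * F n) := by ring
      _ = _ := by rw [← Real.rpow_add hn0]; simp
  · have h1 : ((n : ℝ) / a) ^ p ≤ n / a := by
      have : (1 : ℝ) ≤ n / a := by rw [one_le_div ha0]; exact_mod_cast han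
      simpa using Real.rpow_le_rpow_of_exponent_le this hp1.le
    have h2 : (1 : ℝ) ≤ 2 / (1 - p) := by rw [le_div_iff₀ hp']; linarith
    calc a * F a ≤ a * (K * ((n : ℝ) / a) * F n) := by
          gcongr
          refine (hF a le_rfl han).trans ?_
          gcongr
      _ = K * 1 * (n * F n) := by field_simp
      _ ≤ _ := by gcongr

lemma mul_rpow_sub_le {δ : ℝ} (hδ : 0 ≤ δ) (hδ1 : δ ≤ 1) {a b η : ℝ} (hη : 0 < η) (hb : 0 < b)
    (hba : b ≤ a) :
    a * (a - b) ^ δ ≤ η ^ δ * a ^ (1 + δ) + η ^ (δ - 1) * (a ^ (1 + δ) - b ^ (1 + δ)) := by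
  have ha : 0 < a := hb.trans_le hba
  have hab : b ^ (1 + δ) ≤ a ^ (1 + δ) := by gcongr
  have ea : a ^ (1 + δ) = a * a ^ δ := by rw [Real.rpow_add ha, Real.rpow_one]
  have eb : b ^ (1 + δ) = b * b ^ δ := by rw [Real.rpow_add hb, Real.rpow_one]
  rcases le_or_gt (a - b) (η * a) with h | h
  · have h1 : (a - b) ^ δ ≤ η ^ δ * a ^ δ := by
      rw [← Real.mul_rpow hη.le ha.le]
      have : 0 ≤ a - b := by linarith
      gcongr
    have h2 : 0 ≤ η ^ (δ - 1) * (a ^ (1 + δ) - b ^ (1 + δ)) :=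
      mul_nonneg (by positivity) (by linarith)
    have h3 := mul_le_mul_of_nonneg_left h1 ha.le
    rw [ea] at h2 ⊢
    linarith
  · have hd : 0 < a - b := lt_trans (by positivity) h
    have h1 : (a - b) ^ (δ - 1) ≤ η ^ (δ - 1) * a ^ (δ - 1) := by
      rw [← Real.mul_rpow hη.le ha.le]
      exact Real.rpow_le_rpow_of_nonpos (by positivity) h.le (by linarith)
    have h2 : (a - b) ^ δ = (a - b) * (a - b) ^ (δ - 1) := by
      rw [Real.rpow_sub_one hd.ne']; field_simp
    have h3 : a ^ δ = a * a ^ (δ - 1) := by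
      rw [Real.rpow_sub_one ha.ne']; field_simp
    have h4 : b * b ^ δ ≤ b * a ^ δ := by gcongr
    have h5 : 0 ≤ η ^ δ * a ^ (1 + δ) := by positivity
    calc a * (a - b) ^ δ ≤ a * ((a - b) * (η ^ (δ - 1) * a ^ (δ - 1))) := by
          rw [h2]; gcongr
      _ = η ^ (δ - 1) * (a * a ^ δ - b * a ^ δ) := by rw [h3]; ring
      _ ≤ η ^ (δ - 1) * (a ^ (1 + δ) - b ^ (1 + δ)) := by
          rw [ea, eb]; gcongr
      _ ≤ _ := by linarith

open Filter Topology in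
/-- The choice of the parameters of the packing algorithm. -/
lemma exists_parameters {δ K c : ℝ} (hδ : 0 < δ) (hc : 0 < c) :
    ∃ T η ν : ℝ, 2 ≤ T ∧ 0 < η ∧ 0 < ν ∧ ν ≤ 1 ∧
      (4 / T + 2 * η ^ δ + 3 * ((4 / T + 2 * η ^ δ + 2 * η ^ (δ - 1)) * ν)) * K * T ^ (1 - δ)
        < c := by
  have h1 : Tendsto (fun T : ℝ => 4 * K * T ^ (-δ)) atTop (𝓝 (4 * K * 0)) :=
    (tendsto_rpow_neg_atTop hδ).const_mul _
  rw [mul_zero] at h1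
  obtain ⟨T, hT1, hT⟩ := ((h1.eventually_lt_const hc).and (eventually_ge_atTop 2)).exists
  have hT0 : 0 < T := by linarith
  have e1 : 4 / T * K * T ^ (1 - δ) = 4 * K * T ^ (-δ) := by
    rw [show 1 - δ = 1 + -δ by ring, Real.rpow_add hT0, Real.rpow_one]
    field_simp
  have h2 : Tendsto (fun η : ℝ => (4 / T + 2 * η ^ δ) * K * T ^ (1 - δ)) (𝓝[>] 0)
      (𝓝 ((4 / T + 2 * 0 ^ δ) * K * T ^ (1 - δ))) := by
    refine Tendsto.mono_left ?_ nhdsWithin_le_nhds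
    have := (Real.continuousAt_rpow_const 0 δ (Or.inr hδ.le)).tendsto
    exact (((this.const_mul 2).const_add _).mul_const _).mul_const _
  rw [Real.zero_rpow hδ.ne', mul_zero, add_zero, e1] at h2
  obtain ⟨η, hη1, hη⟩ := ((h2.eventually_lt_const hT1).and self_mem_nhdsWithin).exists
  have h3 : Tendsto (fun ν : ℝ => (4 / T + 2 * η ^ δ +
      3 * ((4 / T + 2 * η ^ δ + 2 * η ^ (δ - 1)) * ν)) * K * T ^ (1 - δ)) (𝓝[>] 0)
      (𝓝 ((4 / T + 2 * η ^ δ +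
      3 * ((4 / T + 2 * η ^ δ + 2 * η ^ (δ - 1)) * 0)) * K * T ^ (1 - δ))) := by
    refine Tendsto.mono_left ?_ nhdsWithin_le_nhds
    exact Continuous.tendsto (by fun_prop) 0
  rw [mul_zero, mul_zero, add_zero] at h3
  obtain ⟨ν, ⟨hν1, hν⟩, hν2⟩ := (((h3.eventually_lt_const hη1).and self_mem_nhdsWithin).and
    (Ioc_mem_nhdsGT (zero_lt_one' ℝ))).exists
  exact ⟨T, η, ν, hT, hη, hν, hν2.2, hν1⟩

open Filter Topology in
lemma eventually_mul_rpow_le {r : ℝ} (hr : r < 1) (K : ℝ) {ε : ℝ} (hε : 0 < ε) :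
    ∀ᶠ n : ℕ in atTop, K * (n : ℝ) ^ r ≤ ε * n := by
  have h1 : Tendsto (fun x : ℝ => K * x ^ (-(1 - r))) atTop (𝓝 (K * 0)) :=
    (tendsto_rpow_neg_atTop (by linarith)).const_mul _
  rw [mul_zero] at h1
  filter_upwards [(h1.comp tendsto_natCast_atTop_atTop).eventually_le_const hε,
    eventually_gt_atTop 0] with n hn hn0
  have hn0 : (0 : ℝ) < n := by exact_mod_cast hn0
  simp only [Function.comp] at hn
  have e : (n : ℝ) ^ r = (n : ℝ) ^ (-(1 - r)) * n := by
    rw [← Real.rpow_add_one hn0.ne']; congr 1; ring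
  rw [e, ← mul_assoc]
  gcongr

open Filter Topology in
/-- Squares whose sidelengths form a sequence of regular variation, decaying faster than
`n ^ (-1/2)` and slower than `n ^ (-1)`, can be packed perfectly. -/
theorem eventually_exists_perfectlyPacked {s : ℕ → ℝ} {N : ℕ} {C τ σ : ℝ} (hN : 1 ≤ N) (hC : 1 ≤ C)
    (hτ : 0 < τ) (hτ1 : τ < 1) (hσ : 1 / 2 < σ)
    (hpos : ∀ n, N ≤ n → 0 < s n) (hanti : ∀ m n, N ≤ m → m ≤ n → s n ≤ s m)
    (hslow : ∀ m n : ℕ, N ≤ m → m ≤ n → s m ≤ C * ((n : ℝ) / m) ^ τ * s n)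
    (hfast : ∀ m n : ℕ, N ≤ m → m ≤ n → s n ≤ C * ((n : ℝ) / m) ^ (-σ) * s m) :
    ∀ᶠ n₀ : ℕ in atTop, ∃ pos : {n : ℕ // n₀ ≤ n} → ℝ × ℝ,
      PerfectlyPacked (fun n : {n : ℕ // n₀ ≤ n} => square (pos n) (s n))
        (square (0, 0) (Real.sqrt (∑' n : {n : ℕ // n₀ ≤ n}, s n ^ 2))) := by
  obtain ⟨δ, hδ, hδ1, hδτ⟩ : ∃ δ : ℝ, 0 < δ ∧ δ < 1 ∧ τ * (1 + δ) < 1 := by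
    have h1 : Tendsto (fun δ : ℝ => τ * (1 + δ)) (𝓝[>] 0) (𝓝 (τ * (1 + 0))) :=
      (Continuous.tendsto (by fun_prop) 0).mono_left nhdsWithin_le_nhds
    rw [add_zero, mul_one] at h1
    obtain ⟨δ, h2, h3⟩ :=
      ((h1.eventually_lt_const hτ1).and (Ioo_mem_nhdsGT (zero_lt_one' ℝ))).exists
    exact ⟨δ, h3.1, h3.2, h2⟩
  obtain ⟨q, hq1, hqσ, hqδ⟩ : ∃ q : ℝ, 1 < q ∧ q ≤ 2 * σ ∧ q / 2 * (1 + δ) < 1 := by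
    have h1 : Tendsto (fun q : ℝ => q / 2 * (1 + δ)) (𝓝[>] 1) (𝓝 (1 / 2 * (1 + δ))) :=
      (Continuous.tendsto (by fun_prop) 1).mono_left nhdsWithin_le_nhds
    obtain ⟨q, h2, h3⟩ :=
      ((h1.eventually_lt_const (by linarith : 1 / 2 * (1 + δ) < 1)).and
        (Ioc_mem_nhdsGT (by linarith : 1 < 2 * σ))).exists
    exact ⟨q, h3.1, h3.2, h2⟩
  have hq2 : q / 2 < 1 := by nlinarith
  have hC0 : 0 < C := by linarith
  -- decay of the squares of the sidelengths
  have hsq : ∀ m n : ℕ, N ≤ m → m ≤ n →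
      s n ^ 2 ≤ C ^ 2 * (m : ℝ) ^ q * s m ^ 2 * (n : ℝ) ^ (-q) := by
    intro m n hm hmn
    have hm0 : (0 : ℝ) < m := by exact_mod_cast hN.trans hm
    have hmn' : (m : ℝ) ≤ n := by exact_mod_cast hmn
    have hn0 : (0 : ℝ) < n := by linarith
    have h1 : ((n : ℝ) / m) ^ (-σ) ≤ ((n : ℝ) / m) ^ (-(q / 2)) :=
      Real.rpow_le_rpow_of_exponent_le ((one_le_div hm0).mpr hmn') (by linarith)
    have h2 : s n ≤ C * ((n : ℝ) / m) ^ (-(q / 2)) * s m := by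
      refine (hfast m n hm hmn).trans ?_
      have := (hpos m hm).le
      gcongr
    have h3 : (((n : ℝ) / m) ^ (-(q / 2))) ^ 2 = (n : ℝ) ^ (-q) * (m : ℝ) ^ q := by
      rw [← Real.rpow_mul_natCast (by positivity), Nat.cast_ofNat,
        show -(q / 2) * 2 = -q by ring, Real.div_rpow hn0.le hm0.le, Real.rpow_neg hm0.le q,
        div_inv_eq_mul]
    calc s n ^ 2 ≤ (C * ((n : ℝ) / m) ^ (-(q / 2)) * s m) ^ 2 := by
          have := (hpos n (hm.trans hmn)).le
          gcongr
      _ = C ^ 2 * (((n : ℝ) / m) ^ (-(q / 2))) ^ 2 * s m ^ 2 := by ring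
      _ = _ := by rw [h3]; ring
  have hζ : Summable fun n : ℕ => (n : ℝ) ^ (-q) := Real.summable_nat_rpow.mpr (by linarith)
  have hsumm : ∀ n, N ≤ n → Summable fun i => s (n + i) ^ 2 := by
    intro n hn
    refine Summable.of_nonneg_of_le (fun _ => sq_nonneg _)
      (fun i => hsq n (n + i) hn (Nat.le_add_right _ _)) ?_
    have := hζ.comp_injective (add_right_injective n)
    exact this.mul_left _
  set A : ℕ → ℝ := fun n => ∑' i, s (n + i) ^ 2 with hAdef
  have hA : ∀ n, N ≤ n → ∀ L, A n = ∑ i ∈ Finset.range L, s (n + i) ^ 2 + A (n + L) := by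
    intro n hn L
    rw [hAdef]
    simp only
    rw [← (hsumm n hn).sum_add_tsum_nat_add L]
    congr 1
    refine tsum_congr fun i => ?_
    rw [add_assoc, add_comm i L]
  set Z : ℝ := C ^ 2 * ∑' n : ℕ, (n : ℝ) ^ (-q) with hZ
  have hZ0 : 0 ≤ Z := by
    have : 0 ≤ ∑' n : ℕ, (n : ℝ) ^ (-q) := tsum_nonneg fun n => by positivity
    positivity
  have hAle : ∀ n, N ≤ n → A n ≤ Z * (n : ℝ) ^ q * s n ^ 2 := by
    intro n hn
    have h1 : Summable fun i : ℕ => ((n + i : ℕ) : ℝ) ^ (-q) :=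
      hζ.comp_injective (add_right_injective n)
    have h2 : ∑' i : ℕ, ((n + i : ℕ) : ℝ) ^ (-q) ≤ ∑' n : ℕ, (n : ℝ) ^ (-q) :=
      h1.tsum_le_tsum_of_inj _ (add_right_injective n) (fun _ _ => by positivity)
        (fun _ => le_rfl) hζ
    calc A n ≤ ∑' i : ℕ, C ^ 2 * (n : ℝ) ^ q * s n ^ 2 * ((n + i : ℕ) : ℝ) ^ (-q) :=
          (hsumm n hn).tsum_le_tsum (fun i => hsq n (n + i) hn (Nat.le_add_right _ _))
            (h1.mul_left _)
      _ = C ^ 2 * (n : ℝ) ^ q * s n ^ 2 * ∑' i : ℕ, ((n + i : ℕ) : ℝ) ^ (-q) := by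
          rw [tsum_mul_left]
      _ ≤ C ^ 2 * (n : ℝ) ^ q * s n ^ 2 * ∑' n : ℕ, (n : ℝ) ^ (-q) := by gcongr
      _ = _ := by rw [hZ]; ring
  -- doubling
  set K : ℝ := C * 2 ^ τ with hKdef
  have hK0 : 0 < K := by positivity
  have hdouble : ∀ n, N ≤ n → ∀ i ≤ n, s n ≤ K * s (n + i) := by
    intro n hn i hi
    have hn0 : (0 : ℝ) < n := by exact_mod_cast hN.trans hn
    have hi' : (i : ℝ) ≤ n := by exact_mod_cast hi
    refine (hslow n (n + i) hn (Nat.le_add_right _ _)).trans ?_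
    have := (hpos (n + i) (hn.trans (Nat.le_add_right _ _))).le
    have h1 : ((n + i : ℕ) : ℝ) / n ≤ 2 := by
      rw [div_le_iff₀ hn0]; push_cast; linarith
    rw [hKdef]
    gcongr
  have hAge : ∀ n, N ≤ n → n * s n ^ 2 ≤ K ^ 2 * A n := by
    intro n hn
    have h1 : n • (s n ^ 2 / K ^ 2) ≤ ∑ i ∈ Finset.range n, s (n + i) ^ 2 := by
      have := Finset.card_nsmul_le_sum (Finset.range n) (fun i => s (n + i) ^ 2)
        (s n ^ 2 / K ^ 2) ?_
      · simpa using this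
      · intro i hi
        rw [div_le_iff₀ (by positivity), mul_comm, ← mul_pow]
        have := (hpos n hn).le
        have := hdouble n hn i (Finset.mem_range.mp hi).le
        gcongr
    have h2 : 0 ≤ A (n + n) := tsum_nonneg fun _ => sq_nonneg _
    rw [nsmul_eq_mul] at h1
    rw [hA n hn n]
    have h3 : (n : ℝ) * s n ^ 2 = K ^ 2 * (n * (s n ^ 2 / K ^ 2)) := by field_simp
    rw [h3]
    gcongr
    linarith
  -- the weights of the squares
  set F : ℕ → ℝ := fun n => s n ^ (1 + δ) with hF
  have hFpos : ∀ n, N ≤ n → 0 < F n := fun n hn => Real.rpow_pos_of_pos (hpos n hn) _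
  have hFanti : ∀ m n, N ≤ m → m ≤ n → F n ≤ F m := by
    intro m n hm hmn
    have := (hpos n (hm.trans hmn)).le
    have := hanti m n hm hmn
    simp only [hF]
    gcongr
  have hFslow : ∀ m n : ℕ, N ≤ m → m ≤ n →
      F m ≤ C ^ (1 + δ) * ((n : ℝ) / m) ^ (τ * (1 + δ)) * F n := by
    intro m n hm hmn
    have h0 := (hpos n (hm.trans hmn)).le
    have h1 : F m ≤ (C * ((n : ℝ) / m) ^ τ * s n) ^ (1 + δ) := by
      have := (hpos m hm).le
      have := hslow m n hm hmn
      simp only [hF]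
      gcongr
    rwa [Real.mul_rpow (by positivity) h0, Real.mul_rpow (by positivity) (by positivity),
      ← Real.rpow_mul (by positivity)] at h1
  set M : ℝ := C ^ (1 + δ) * (2 / (1 - τ * (1 + δ))) with hM
  have hFsum : ∀ m n : ℕ, N ≤ m → m ≤ n →
      ∑ i ∈ Finset.Ico m n, F i ≤ M * (n * F n) ∧ m * F m ≤ M * (n * F n) := fun m n hm hmn =>
    sum_Ico_le_of_regular (by positivity) (by positivity) hδτ (hN.trans hm) hmn
      (hFpos n (hm.trans hmn)).le fun i hi hin => hFslow i n (hm.trans hi) hin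
  obtain ⟨T, η, ν, hT, hη, hν, hν1, hpar⟩ :=
    exists_parameters (K := M) hδ (show 0 < (K ^ 2)⁻¹ by positivity)
  set a : ℝ := 4 / T + 2 * η ^ δ with ha
  set e : ℝ := 2 * η ^ (δ - 1) with he
  have hT0 : 0 < T := by linarith
  have ha0 : 0 < a := by positivity
  have he0 : 0 < e := by positivity
  set b : ℝ := (a + e) * ν with hb
  have hb0 : 0 < b := by positivity
  filter_upwards [eventually_ge_atTop N,
    eventually_mul_rpow_le hqδ (2 * Z ^ ((1 + δ) / 2)) hb0,
    eventually_mul_rpow_le hq2 (Z ^ (1 / 2 : ℝ)) (show 0 < ν / (2 * K * C) by positivity)]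
    with n₀ hn₀ hlarge₁ hlarge₂
  have hn₀0 : (0 : ℝ) < n₀ := by exact_mod_cast hN.trans hn₀
  have hs₀ := hpos n₀ hn₀
  have hApos : 0 < A n₀ := by
    have := hAge n₀ hn₀
    by_contra! hc
    have h1 : K ^ 2 * A n₀ ≤ 0 := mul_nonpos_of_nonneg_of_nonpos (by positivity) hc
    have h2 : 0 < n₀ * s n₀ ^ 2 := by positivity
    linarith
  have htsum : HasSum (fun n : {n : ℕ // n₀ ≤ n} => s n ^ 2) (A n₀) := by
    let φ : ℕ ≃ {n : ℕ // n₀ ≤ n} :=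
      { toFun := fun i => ⟨n₀ + i, Nat.le_add_right _ _⟩
        invFun := fun n => n - n₀
        left_inv := fun i => by simp
        right_inv := fun n => Subtype.ext (by simp [n.2]) }
    rw [← φ.hasSum_iff]
    exact (hsumm n₀ hn₀).hasSum
  rw [htsum.tsum_eq]
  set W : ℝ := Real.sqrt (A n₀) with hW
  have hW0 : 0 < W := Real.sqrt_pos.mpr hApos
  have hW2 : W ^ 2 = A n₀ := Real.sq_sqrt hApos.le
  have hWr : ∀ r : ℝ, 0 ≤ r → W ^ r ≤ Z ^ (r / 2) * (n₀ : ℝ) ^ (q / 2 * r) * s n₀ ^ r := by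
    intro r hr
    have h1 : W ^ r = (A n₀) ^ (r / 2) := by
      rw [← hW2, ← Real.rpow_natCast_mul hW0.le]; congr 1; push_cast; ring
    have h2 : (Z * (n₀ : ℝ) ^ q * s n₀ ^ 2) ^ (r / 2)
        = Z ^ (r / 2) * (n₀ : ℝ) ^ (q / 2 * r) * s n₀ ^ r := by
      rw [Real.mul_rpow (by positivity) (by positivity),
        Real.mul_rpow (by positivity) (by positivity), ← Real.rpow_mul hn₀0.le,
        ← Real.rpow_natCast_mul hs₀.le]
      congr 2
      · congr 1; ring
      · push_cast; ring
    rw [h1, ← h2]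
    have := hAle n₀ hn₀
    gcongr
  have hWsmall : ∀ n, n₀ ≤ n → K * W < ν * n * s n := by
    intro n hn
    have hNn := hn₀.trans hn
    have hsn := hpos n hNn
    have hn0 : (0 : ℝ) < n := by exact_mod_cast hN.trans hNn
    have h1 : W ≤ ν / (2 * K * C) * n₀ * s n₀ := by
      have := hWr 1 zero_le_one
      rw [Real.rpow_one, Real.rpow_one, mul_one] at this
      refine this.trans ?_
      gcongr
    have h2 : n₀ * s n₀ ≤ C * n * s n := by
      have h3 : ((n : ℝ) / n₀) ^ τ ≤ n / n₀ := by
        have : (1 : ℝ) ≤ n / n₀ := by rw [one_le_div hn₀0]; exact_mod_cast hn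
        simpa using Real.rpow_le_rpow_of_exponent_le this hτ1.le
      calc n₀ * s n₀ ≤ n₀ * (C * ((n : ℝ) / n₀) * s n) := by
            gcongr
            refine (hslow n₀ n hn₀ hn).trans ?_
            gcongr
        _ = _ := by field_simp
    calc K * W ≤ K * (ν / (2 * K * C) * n₀ * s n₀) := by gcongr
      _ = ν / (2 * C) * (n₀ * s n₀) := by field_simp
      _ ≤ ν / (2 * C) * (C * n * s n) := by gcongr
      _ = ν * n * s n / 2 := by field_simp
      _ < _ := half_lt_self (by positivity)
  set E : ℕ → ℝ := fun n => 2 * W ^ (1 + δ) + (a + b) * ∑ i ∈ Finset.Ico n₀ n, F i +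
    b * (n₀ * F n₀ - n * F n) with hE
  have hEle : ∀ n, n₀ ≤ n → E n ≤ (a + 3 * b) * M * (n * F n) := by
    intro n hn
    obtain ⟨h1, h2⟩ := hFsum n₀ n hn₀ hn
    have h3 : 0 ≤ n * F n := mul_nonneg (Nat.cast_nonneg n) (hFpos n (hn₀.trans hn)).le
    have h4 : 2 * W ^ (1 + δ) ≤ b * (n₀ * F n₀) := by
      have h5 := hWr (1 + δ) (by linarith)
      have h6 := mul_le_mul_of_nonneg_right hlarge₁ (hFpos n₀ hn₀).le
      simp only [hF] at h6 ⊢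
      linarith
    have h5 : (a + b) * ∑ i ∈ Finset.Ico n₀ n, F i ≤ (a + b) * (M * (n * F n)) := by gcongr
    have h6 : b * (n₀ * F n₀) ≤ b * (M * (n * F n)) := by gcongr
    have h7 : 0 ≤ b * (n * F n) := by positivity
    simp only [hE]
    linarith
  refine perfectlyPacked_of_stages (δ := δ) (T := T) (A := A) (E := E) hδ.le hδ1.le
    (by linarith) hW0 (fun n hn => hpos n (hn₀.trans hn))
    (fun m n hm hmn => hanti m n (hn₀.trans hm) hmn) (fun n hn => hA n (hn₀.trans hn))
    (hW2.symm ▸ htsum) hW2 (by simp [hE]) ?_ ?_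
  · intro n hn
    have hNn := hn₀.trans hn
    have hsn := hpos n hNn
    have hn0 : (0 : ℝ) < n := by exact_mod_cast hN.trans hNn
    have h1 : s n ^ (1 - δ) * F n = s n ^ 2 := by
      simp only [hF]
      rw [← Real.rpow_add hsn, ← Real.rpow_natCast]
      congr 1
      push_cast
      ring
    calc (T * s n) ^ (1 - δ) * E n
        ≤ (T * s n) ^ (1 - δ) * ((a + 3 * b) * M * (n * F n)) := by
          have := hEle n hn
          gcongr
      _ = (a + 3 * b) * M * T ^ (1 - δ) * (n * (s n ^ (1 - δ) * F n)) := by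
          rw [Real.mul_rpow hT0.le hsn.le]; ring
      _ = (a + 3 * b) * M * T ^ (1 - δ) * (n * s n ^ 2) := by rw [h1]
      _ < (K ^ 2)⁻¹ * (n * s n ^ 2) := by gcongr
      _ ≤ (K ^ 2)⁻¹ * (K ^ 2 * A n) := by
          have := hAge n hNn
          gcongr
      _ = A n := by field_simp
  · intro n hn w hw hwW
    have hNn := hn₀.trans hn
    have hsn := hpos n hNn
    have hn0 : (0 : ℝ) < n := by exact_mod_cast hN.trans hNn
    have hsmall := hWsmall n hn
    have hlow : ∀ L ≤ n, L * s n ≤ K * ∑ i ∈ Finset.range L, s (n + i) := by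
      intro L hL
      have := Finset.card_nsmul_le_sum (Finset.range L) (fun i => K * s (n + i)) (s n)
        fun i hi => hdouble n hNn i ((Finset.mem_range.mp hi).le.trans hL)
      rw [Finset.mul_sum]
      simpa using this
    have hex : ∃ L, w < ∑ i ∈ Finset.range (L + 1), s (n + i) := by
      refine ⟨n - 1, ?_⟩
      have hn1 : n - 1 + 1 = n := Nat.sub_add_cancel (hN.trans hNn)
      rw [hn1]
      have h1 := hlow n le_rfl
      have h2 : ν * n * s n ≤ n * s n := by
        rw [mul_assoc]
        exact mul_le_of_le_one_left (by positivity) hν1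
      have h3 : K * W < K * ∑ i ∈ Finset.range n, s (n + i) := by linarith
      exact hwW.trans_lt (lt_of_mul_lt_mul_left h3 hK0.le)
    classical
    obtain ⟨L, hL1, hLmin⟩ : ∃ L, w < ∑ i ∈ Finset.range (L + 1), s (n + i) ∧
        ∀ l < L, ∑ i ∈ Finset.range (l + 1), s (n + i) ≤ w :=
      ⟨Nat.find hex, Nat.find_spec hex, fun l hl => not_lt.mp (Nat.find_min hex hl)⟩
    have hup : ∑ i ∈ Finset.range (L + 1), s (n + i) ≤ (L + 1) * s n := by
      have := Finset.sum_le_card_nsmul (Finset.range (L + 1)) (fun i => s (n + i)) (s n)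
        fun i _ => hanti n (n + i) hNn (Nat.le_add_right _ _)
      simpa using this
    have hTL : T < L + 1 := lt_of_mul_lt_mul_right (hw.trans (hL1.trans_le hup)) hsn.le
    have hLpos : 1 ≤ L := by
      have : (0 : ℝ) < L := by linarith
      exact_mod_cast this
    have hLpos' : (1 : ℝ) ≤ L := by exact_mod_cast hLpos
    have hsumw : ∑ i ∈ Finset.range L, s (n + i) ≤ w := by
      have := hLmin (L - 1) (by omega)
      rwa [Nat.sub_add_cancel hLpos] at this
    have hLn : L ≤ n := by
      by_contra! hc
      have h1 := hLmin (n - 1) (by omega)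
      rw [Nat.sub_add_cancel (hN.trans hNn)] at h1
      have h2 := hlow n le_rfl
      have h3 : K * ∑ i ∈ Finset.range n, s (n + i) ≤ K * W := by
        gcongr
        exact h1.trans hwW
      have h4 : ν * n * s n ≤ n * s n := by
        rw [mul_assoc]
        exact mul_le_of_le_one_left (by positivity) hν1
      linarith
    have hLν : (L : ℝ) ≤ ν * n := by
      have h1 := hlow L hLn
      have h3 : K * ∑ i ∈ Finset.range L, s (n + i) ≤ K * W := by
        gcongr
        exact hsumw.trans hwW
      exact le_of_mul_le_mul_right (h1.trans (h3.trans hsmall.le)) hsn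
    refine ⟨L, hLpos, hsumw, ?_, ?_⟩
    · rw [Finset.sum_range_succ] at hL1
      have := hanti n (n + L) hNn (Nat.le_add_right _ _)
      linarith
    · have hnL : N ≤ n + L := hNn.trans (Nat.le_add_right _ _)
      have h1 := mul_rpow_sub_le hδ.le hδ1.le hη (hpos (n + L) hnL)
        (hanti n (n + L) hNn (Nat.le_add_right _ _))
      change s n * (s n - s (n + L)) ^ δ ≤ η ^ δ * F n + η ^ (δ - 1) * (F n - F (n + L)) at h1
      have hF1 := hFpos n hNn
      have hFd : 0 ≤ F n - F (n + L) := sub_nonneg.mpr (hFanti n (n + L) hNn (Nat.le_add_right _ _))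
      have h2 : L * (2 * s n * (s n - s (n + L)) ^ δ) ≤
          L * (2 * η ^ δ * F n + e * (F n - F (n + L))) := by
        gcongr
        rw [he]
        linarith
      have h3 : 2 * F n ≤ L * (4 / T * F n) := by
        have : 2 ≤ L * (4 / T) := by
          rw [mul_div_assoc', le_div_iff₀ hT0]; linarith
        calc 2 * F n ≤ L * (4 / T) * F n := by gcongr
          _ = _ := by ring
      have h4 : (a + e) * (L * (F n - F (n + L))) ≤ b * (n * (F n - F (n + L))) := by
        calc (a + e) * (L * (F n - F (n + L))) ≤ (a + e) * (ν * n * (F n - F (n + L))) := by gcongr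
          _ = _ := by rw [hb]; ring
      have h5 : L * F (n + L) ≤ ∑ i ∈ Finset.Ico n (n + L), F i := by
        have := Finset.card_nsmul_le_sum (Finset.Ico n (n + L)) F (F (n + L)) fun i hi =>
          hFanti i (n + L) (hNn.trans (Finset.mem_Ico.mp hi).1) (Finset.mem_Ico.mp hi).2.le
        simpa using this
      have h6 : (a + b) * (L * F (n + L)) ≤ (a + b) * ∑ i ∈ Finset.Ico n (n + L), F i := by gcongr
      have h7 := Finset.sum_Ico_consecutive F hn (Nat.le_add_right n L)
      have h8 : a * (L * F n) = L * (4 / T * F n) + L * (2 * η ^ δ * F n) := by rw [ha]; ring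
      change E n + 2 * F n + _ ≤ E (n + L)
      simp only [hE]
      rw [← h7]
      push_cast
      linarith

theorem ineffective_perfect_packing
    (κ : ℝ → ℝ)
    (hκ_gt_one : ∀ x : ℝ, 1 < x → 1 < κ x)
    (hκ_smooth : ContDiffOn ℝ (⊤ : ℕ∞) κ (Set.Ioi 1))
    (hf_incr : StrictMonoOn (fun x : ℝ => x * κ x) (Set.Ioi 1))
    -- fixed positive constants C_𝔪 > c_𝔪 > 0 and 0 < α < 1, C_α > 1
    (cm Cm : ℝ) (hcm : 0 < cm) (hcmCm : cm < Cm)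
    (α Cα : ℝ) (hα₁ : 0 < α) (hα₂ : α < 1) (hCα : 1 < Cα)
    -- for every ε > 0 there is N_ε such that the stated conditions hold for all n ≥ N_ε
    (hcond : ∀ ε : ℝ, 0 < ε → ∃ Nε : ℕ, 0 < Nε ∧ ∀ n : ℕ, Nε ≤ n →
      (∀ x ∈ Set.Icc (n : ℝ) (2 * (n : ℝ)), derivWithin κ (Set.Ioi 1) x ≤ ε * κ (n : ℝ)) ∧
      (1 - ε) * sInf (κ '' Set.Ioc (1 : ℝ) (2 * (n : ℝ))) ≤ κ (n : ℝ) ∧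
      κ (n : ℝ) ≤ (n : ℝ) ^ ε ∧
      cm * κ (n : ℝ) ≤ sInf (κ '' Set.Ici (n : ℝ)) ∧
      sInf (κ '' Set.Ici (n : ℝ)) ≤ Cm * κ (n : ℝ) ∧
      κ (n : ℝ) ≤ Cα * sInf (κ '' Set.Ici ((n : ℝ) ^ α))) :
    ∀ t : ℝ, 1 / 2 < t → t < 1 →
      ∃ N₀ : ℕ, 0 < N₀ ∧ ∀ n₀ : ℕ, N₀ ≤ n₀ →
        ∃ (c : ℝ × ℝ) (pos : {n : ℕ // n₀ ≤ n} → ℝ × ℝ),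
          PerfectlyPacked
            (fun n : {n : ℕ // n₀ ≤ n} =>
              square (pos n) ((((n : ℕ) : ℝ) * κ (((n : ℕ) : ℝ))) ^ (-t)))
            (square c
              (Real.sqrt
                (∑' n : {n : ℕ // n₀ ≤ n},
                  ((((n : ℕ) : ℝ) * κ (((n : ℕ) : ℝ))) ^ (-(2 * t)))))) := by
  intro t ht ht1
  have ht0 : 0 < t := by linarith
  have hα' : 0 < 1 - α := by linarith
  set θ : ℝ := (1 / t - 1) / 2 with hθ
  have hθ0 : 0 < θ := by
    have : 1 < 1 / t := by rw [lt_div_iff₀ ht0]; linarith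
    rw [hθ]; linarith
  have hτ : (1 + θ) * t = (1 + t) / 2 := by rw [hθ]; field_simp; ring
  obtain ⟨N, -, hN⟩ := hcond ((1 - α) * θ) (by positivity)
  have hone : ∀ n : ℕ, max N 2 ≤ n → (1 : ℝ) < n := fun n hn => by
    exact_mod_cast (le_max_right N 2).trans hn
  have hinf : ∀ n : ℕ, max N 2 ≤ n → ∀ x : ℝ, (n : ℝ) ^ α ≤ x → κ n ≤ Cα * κ x := by
    intro n hn x hx
    obtain ⟨-, -, -, -, -, h⟩ := hN n ((le_max_left _ _).trans hn)
    have h1 : (1 : ℝ) < (n : ℝ) ^ α := Real.one_lt_rpow (hone n hn) hα₁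
    refine h.trans ?_
    gcongr
    refine csInf_le ⟨1, ?_⟩ ⟨x, hx, rfl⟩
    rintro _ ⟨y, hy, rfl⟩
    exact (hκ_gt_one y (h1.trans_le hy)).le
  have hmain := eventually_exists_perfectlyPacked (s := fun n : ℕ => ((n : ℝ) * κ n) ^ (-t))
    (N := max N 2) (C := Cα ^ t) (τ := (1 + θ) * t) (σ := t)
    (le_trans (by norm_num) (le_max_right N 2)) (Real.one_le_rpow hCα.le ht0.le) (by positivity)
    (by linarith) ht ?_ ?_ ?_ ?_
  · obtain ⟨N₀, hN₀⟩ := Filter.eventually_atTop.mp hmain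
    refine ⟨max (max N₀ N) 2, by positivity, fun n₀ hn₀ => ⟨(0, 0), ?_⟩⟩
    obtain ⟨pos, hpos⟩ := hN₀ n₀ (by omega)
    have hsum : ∑' n : {n : ℕ // n₀ ≤ n}, ((n : ℝ) * κ n) ^ (-(2 * t)) =
        ∑' n : {n : ℕ // n₀ ≤ n}, (((n : ℝ) * κ n) ^ (-t)) ^ 2 := by
      refine tsum_congr fun n => ?_
      have hn : max N 2 ≤ (n : ℕ) := by have := n.2; omega
      have h1 := hone n hn
      have h2 := hκ_gt_one _ h1
      rw [← Real.rpow_mul_natCast (by positivity)]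
      congr 1
      push_cast
      ring
    rw [hsum]
    exact ⟨pos, hpos⟩
  · intro n hn
    have h1 := hone n hn
    have h2 := hκ_gt_one _ h1
    positivity
  · intro m n hm hmn
    have h1 := hone m hm
    have h2 := hκ_gt_one _ h1
    exact Real.rpow_le_rpow_of_nonpos (by positivity)
      (hf_incr.monotoneOn h1 (hone n (hm.trans hmn)) (by exact_mod_cast hmn)) (by linarith)
  · intro m n hm hmn
    have hm1 := hone m hm
    have hn1 := hone n (hm.trans hmn)
    have hκm := hκ_gt_one _ hm1
    have hκn := hκ_gt_one _ hn1
    have hmn' : (m : ℝ) ≤ n := by exact_mod_cast hmn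
    have hm0 : (0 : ℝ) < m := by linarith
    have hn0 : (0 : ℝ) < n := by linarith
    have hr : (1 : ℝ) ≤ n / m := by rwa [one_le_div hm0]
    have hr1 : (1 : ℝ) ≤ ((n : ℝ) / m) ^ θ := Real.one_le_rpow hr hθ0.le
    have hκ : κ n ≤ Cα * ((n : ℝ) / m) ^ θ * κ m := by
      rcases le_or_gt ((n : ℝ) ^ α) m with h | h
      · refine (hinf n (hm.trans hmn) m h).trans ?_
        gcongr
        nlinarith
      · obtain ⟨-, -, h1, -⟩ := hN n ((le_max_left _ _).trans (hm.trans hmn))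
        have h2 : (n : ℝ) ^ (1 - α) ≤ n / m := by
          rw [Real.rpow_sub hn0, Real.rpow_one]
          gcongr
        have h3 : κ n ≤ ((n : ℝ) / m) ^ θ := by
          rw [Real.rpow_mul hn0.le] at h1
          refine h1.trans ?_
          gcongr
        calc κ n ≤ 1 * ((n : ℝ) / m) ^ θ * 1 := by simpa using h3
          _ ≤ _ := by gcongr
    have hf : (n : ℝ) * κ n ≤ Cα * ((n : ℝ) / m) ^ (1 + θ) * (m * κ m) := by
      rw [Real.rpow_add (by positivity), Real.rpow_one]
      calc (n : ℝ) * κ n ≤ n * (Cα * ((n : ℝ) / m) ^ θ * κ m) := by gcongr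
        _ = _ := by field_simp
    have hft : ((n : ℝ) * κ n) ^ t ≤ Cα ^ t * ((n : ℝ) / m) ^ ((1 + θ) * t) * (m * κ m) ^ t := by
      rw [Real.rpow_mul (by positivity), ← Real.mul_rpow (by positivity) (by positivity),
        ← Real.mul_rpow (by positivity) (by positivity)]
      gcongr
    rw [Real.rpow_neg (by positivity), Real.rpow_neg (by positivity), ← div_eq_mul_inv,
      le_div_iff₀ (by positivity), inv_mul_le_iff₀ (by positivity)]
    linarith
  · intro m n hm hmn
    have hm1 := hone m hm
    have hn1 := hone n (hm.trans hmn)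
    have hκm := hκ_gt_one _ hm1
    have hκn := hκ_gt_one _ hn1
    have hmn' : (m : ℝ) ≤ n := by exact_mod_cast hmn
    have hm0 : (0 : ℝ) < m := by linarith
    have hn0 : (0 : ℝ) < n := by linarith
    have hκ : κ m ≤ Cα * κ n := by
      refine hinf m hm n (le_trans ?_ hmn')
      simpa using Real.rpow_le_rpow_of_exponent_le hm1.le hα₂.le
    have hf : (n : ℝ) / m * (m * κ m) ≤ Cα * (n * κ n) := by
      calc (n : ℝ) / m * (m * κ m) = n * κ m := by field_simp
        _ ≤ n * (Cα * κ n) := by gcongr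
        _ = _ := by ring
    have hft : ((n : ℝ) / m) ^ t * (m * κ m) ^ t ≤ Cα ^ t * (n * κ n) ^ t := by
      rw [← Real.mul_rpow (by positivity) (by positivity),
        ← Real.mul_rpow (by positivity) (by positivity)]
      gcongr
    rw [Real.rpow_neg (by positivity), Real.rpow_neg (by positivity), Real.rpow_neg (by positivity),
      mul_assoc, ← mul_inv, ← div_eq_mul_inv, le_div_iff₀ (by positivity),
      inv_mul_le_iff₀ (by positivity)]
    linarith
end

section
/- For any 1/2 < t < 1 and any real x ≥ 6, one has ∑_{n ≤ x} p_n^{-t} > 7·(x^{1−t} − 6^{1−t})/(10(1−t)(log x)^t), where the sum ranges over all positive integers n with n ≤ x. -/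
/-- The `n`-th prime number, 1-indexed: `nthPrime 1 = 2`, `nthPrime 2 = 3`, ... -/
noncomputable def nthPrime (n : ℕ) : ℕ := Nat.nth Nat.Prime (n - 1)

/-- A lower bound, evaluated by bisection, for the number of `k ∈ [a, a + n)` coprime to `P`. -/
def coprimeCount (P : ℕ) : ℕ → ℕ → ℕ → ℕ
  | 0, a, n => if Nat.gcd a P = 1 then min n 1 else 0
  | f + 1, a, n => coprimeCount P f a (n / 2) + coprimeCount P f (a + n / 2) (n - n / 2)

theorem count_prime_add_coprimeCount_le {P B : ℕ} (hP : ∀ p < B, p.Prime → p ∣ P) (f : ℕ) :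
    ∀ a n : ℕ, 2 ≤ a → a + n ≤ B ^ 2 →
      Nat.count Nat.Prime a + coprimeCount P f a n ≤ Nat.count Nat.Prime (a + n) := by
  induction f with
  | zero =>
    intro a n ha hB
    rw [coprimeCount]
    split_ifs with hg
    · rcases Nat.eq_zero_or_pos n with rfl | hn
      · simp
      have hprime : a.Prime := by
        by_contra hna
        have hsq := Nat.minFac_sq_le_self (by omega) hna
        have hlt : a.minFac < B := lt_of_pow_lt_pow_left₀ 2 (Nat.zero_le _) (by omega)
        have hmp := Nat.minFac_prime (n := a) (by omega)
        have hdvd := Nat.dvd_gcd (Nat.minFac_dvd a) (hP _ hlt hmp)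
        rw [hg] at hdvd
        exact hmp.one_lt.ne' (Nat.dvd_one.mp hdvd)
      calc Nat.count Nat.Prime a + min n 1 = Nat.count Nat.Prime (a + 1) := by
            rw [Nat.count_succ, if_pos hprime, min_eq_right hn]
        _ ≤ _ := Nat.count_monotone _ (by omega)
    · exact Nat.count_monotone _ (by omega)
  | succ f ih =>
    intro a n ha hB
    have h₁ := ih a (n / 2) ha (by omega)
    have h₂ := ih (a + n / 2) (n - n / 2) (by omega) (by omega)
    rw [show a + n / 2 + (n - n / 2) = a + n by omega] at h₂
    rw [coprimeCount]
    omega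

/-- The product of the primes below `167`. -/
def primorial166 : ℕ := 5766152219975951659023630035336134306565384015606066319856068810

theorem dvd_primorial166 : ∀ p < 167, p.Prime → p ∣ primorial166 := by
  decide +kernel

theorem le_count_prime_of_le_coprimeCount {a b M M' : ℕ} (f : ℕ)
    (ha : M ≤ Nat.count Nat.Prime a)
    (h : 2 ≤ a ∧ a ≤ b ∧ b ≤ 167 ^ 2 ∧ M' ≤ M + coprimeCount primorial166 f a (b - a)) :
    M' ≤ Nat.count Nat.Prime b := by
  obtain ⟨h2, hab, hb, hM⟩ := h
  have := count_prime_add_coprimeCount_le dvd_primorial166 f a (b - a) h2 (by omega)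
  rw [Nat.add_sub_cancel' hab] at this
  omega

theorem nth_prime_le_of_le_count {m m₀ M N k : ℕ} (hc : M ≤ Nat.count Nat.Prime N)
    (hm₀ : m₀ < m) (hM : m ≤ M) (hk : 2 ^ k ≤ (m₀ + 1) ^ 10)
    (h : 70000 * (N - 1) ≤ 6931 * (m₀ + 1) * k) :
    (Nat.nth Nat.Prime (m - 1) : ℝ) ≤ 10 / 7 * (m * Real.log m) := by
  have hlt : Nat.nth Nat.Prime (m - 1) < N := Nat.nth_lt_of_lt_count (by omega)
  have hle : (70000 : ℝ) * Nat.nth Nat.Prime (m - 1) ≤ 6931 * m * k := by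
    have : 6931 * (m₀ + 1) * k ≤ 6931 * m * k := by gcongr; omega
    exact_mod_cast (show 70000 * Nat.nth Nat.Prime (m - 1) ≤ 6931 * m * k by omega)
  have hlog : (k : ℝ) * Real.log 2 ≤ 10 * Real.log m := by
    have hpow : ((2 : ℝ) ^ k) ≤ (m : ℝ) ^ 10 := by
      exact_mod_cast hk.trans (Nat.pow_le_pow_left hm₀ 10)
    simpa [Real.log_pow] using Real.log_le_log (by positivity) hpow
  have hk' : (k : ℝ) * 0.6931 ≤ 10 * Real.log m := by
    refine le_trans ?_ hlog
    gcongr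
    linarith [Real.log_two_gt_d9]
  have := mul_le_mul_of_nonneg_left hk' (Nat.cast_nonneg (α := ℝ) m)
  linarith

theorem nth_prime_le_of_le_three_thousand {m : ℕ} (hm : 5 < m) (hm' : m ≤ 3000) :
    (Nat.nth Nat.Prime (m - 1) : ℝ) ≤ 10 / 7 * (m * Real.log m) := by
  have hc : 6 ≤ Nat.count Nat.Prime 14 := by decide +kernel
  rcases le_or_gt m 6 with hM | hM
  · exact nth_prime_le_of_le_count (k := 25) hc hm hM (by norm_num) (by norm_num)
  replace hm := hM
  replace hc : 8 ≤ Nat.count Nat.Prime 20 := by decide +kernel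
  rcases le_or_gt m 8 with hM | hM
  · exact nth_prime_le_of_le_count (k := 28) hc hm hM (by norm_num) (by norm_num)
  replace hm := hM
  replace hc : 9 ≤ Nat.count Nat.Prime 24 := by decide +kernel
  rcases le_or_gt m 9 with hM | hM
  · exact nth_prime_le_of_le_count (k := 31) hc hm hM (by norm_num) (by norm_num)
  replace hm := hM
  replace hc : 11 ≤ Nat.count Nat.Prime 32 := by decide +kernel
  rcases le_or_gt m 11 with hM | hM
  · exact nth_prime_le_of_le_count (k := 33) hc hm hM (by norm_num) (by norm_num)
  replace hm := hM
  replace hc : 13 ≤ Nat.count Nat.Prime 42 := by decide +kernel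
  rcases le_or_gt m 13 with hM | hM
  · exact nth_prime_le_of_le_count (k := 35) hc hm hM (by norm_num) (by norm_num)
  replace hm := hM
  replace hc : 15 ≤ Nat.count Nat.Prime 48 := by decide +kernel
  rcases le_or_gt m 15 with hM | hM
  · exact nth_prime_le_of_le_count (k := 38) hc hm hM (by norm_num) (by norm_num)
  replace hm := hM
  replace hc : 18 ≤ Nat.count Nat.Prime 62 := by decide +kernel
  rcases le_or_gt m 18 with hM | hM
  · exact nth_prime_le_of_le_count (k := 40) hc hm hM (by norm_num) (by norm_num)
  replace hm := hM
  replace hc : 22 ≤ Nat.count Nat.Prime 80 := by decide +kernel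
  rcases le_or_gt m 22 with hM | hM
  · exact nth_prime_le_of_le_count (k := 42) hc hm hM (by norm_num) (by norm_num)
  replace hm := hM
  replace hc : 26 ≤ Nat.count Nat.Prime 102 := by decide +kernel
  rcases le_or_gt m 26 with hM | hM
  · exact nth_prime_le_of_le_count (k := 45) hc hm hM (by norm_num) (by norm_num)
  replace hm := hM
  replace hc : 30 ≤ Nat.count Nat.Prime 114 := by decide +kernel
  rcases le_or_gt m 30 with hM | hM
  · exact nth_prime_le_of_le_count (k := 47) hc hm hM (by norm_num) (by norm_num)
  replace hm := hM
  replace hc : 35 ≤ Nat.count Nat.Prime 150 := by decide +kernel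
  rcases le_or_gt m 35 with hM | hM
  · exact nth_prime_le_of_le_count (k := 49) hc hm hM (by norm_num) (by norm_num)
  replace hm := hM
  replace hc : 42 ≤ Nat.count Nat.Prime 182 := by decide +kernel
  rcases le_or_gt m 42 with hM | hM
  · exact nth_prime_le_of_le_count (k := 51) hc hm hM (by norm_num) (by norm_num)
  replace hm := hM
  replace hc : 50 ≤ Nat.count Nat.Prime 230 := le_count_prime_of_le_coprimeCount 13 hc (by decide +kernel)
  rcases le_or_gt m 50 with hM | hM
  · exact nth_prime_le_of_le_count (k := 54) hc hm hM (by norm_num) (by norm_num)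
  replace hm := hM
  replace hc : 60 ≤ Nat.count Nat.Prime 282 := le_count_prime_of_le_coprimeCount 13 hc (by decide +kernel)
  rcases le_or_gt m 60 with hM | hM
  · exact nth_prime_le_of_le_count (k := 56) hc hm hM (by norm_num) (by norm_num)
  replace hm := hM
  replace hc : 71 ≤ Nat.count Nat.Prime 354 := le_count_prime_of_le_coprimeCount 13 hc (by decide +kernel)
  rcases le_or_gt m 71 with hM | hM
  · exact nth_prime_le_of_le_count (k := 59) hc hm hM (by norm_num) (by norm_num)
  replace hm := hM
  replace hc : 84 ≤ Nat.count Nat.Prime 434 := le_count_prime_of_le_coprimeCount 13 hc (by decide +kernel)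
  rcases le_or_gt m 84 with hM | hM
  · exact nth_prime_le_of_le_count (k := 61) hc hm hM (by norm_num) (by norm_num)
  replace hm := hM
  replace hc : 99 ≤ Nat.count Nat.Prime 524 := le_count_prime_of_le_coprimeCount 13 hc (by decide +kernel)
  rcases le_or_gt m 99 with hM | hM
  · exact nth_prime_le_of_le_count (k := 64) hc hm hM (by norm_num) (by norm_num)
  replace hm := hM
  replace hc : 119 ≤ Nat.count Nat.Prime 654 := le_count_prime_of_le_coprimeCount 13 hc (by decide +kernel)
  rcases le_or_gt m 119 with hM | hM
  · exact nth_prime_le_of_le_count (k := 66) hc hm hM (by norm_num) (by norm_num)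
  replace hm := hM
  replace hc : 141 ≤ Nat.count Nat.Prime 812 := le_count_prime_of_le_coprimeCount 13 hc (by decide +kernel)
  rcases le_or_gt m 141 with hM | hM
  · exact nth_prime_le_of_le_count (k := 69) hc hm hM (by norm_num) (by norm_num)
  replace hm := hM
  replace hc : 168 ≤ Nat.count Nat.Prime 998 := le_count_prime_of_le_coprimeCount 13 hc (by decide +kernel)
  rcases le_or_gt m 168 with hM | hM
  · exact nth_prime_le_of_le_count (k := 71) hc hm hM (by norm_num) (by norm_num)
  replace hm := hM
  replace hc : 203 ≤ Nat.count Nat.Prime 1238 := le_count_prime_of_le_coprimeCount 13 hc (by decide +kernel)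
  rcases le_or_gt m 203 with hM | hM
  · exact nth_prime_le_of_le_count (k := 74) hc hm hM (by norm_num) (by norm_num)
  replace hm := hM
  replace hc : 242 ≤ Nat.count Nat.Prime 1532 := le_count_prime_of_le_coprimeCount 13 hc (by decide +kernel)
  rcases le_or_gt m 242 with hM | hM
  · exact nth_prime_le_of_le_count (k := 76) hc hm hM (by norm_num) (by norm_num)
  replace hm := hM
  replace hc : 290 ≤ Nat.count Nat.Prime 1890 := le_count_prime_of_le_coprimeCount 13 hc (by decide +kernel)
  rcases le_or_gt m 290 with hM | hM
  · exact nth_prime_le_of_le_count (k := 79) hc hm hM (by norm_num) (by norm_num)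
  replace hm := hM
  replace hc : 345 ≤ Nat.count Nat.Prime 2334 := le_count_prime_of_le_coprimeCount 13 hc (by decide +kernel)
  rcases le_or_gt m 345 with hM | hM
  · exact nth_prime_le_of_le_count (k := 81) hc hm hM (by norm_num) (by norm_num)
  replace hm := hM
  replace hc : 416 ≤ Nat.count Nat.Prime 2862 := le_count_prime_of_le_coprimeCount 13 hc (by decide +kernel)
  rcases le_or_gt m 416 with hM | hM
  · exact nth_prime_le_of_le_count (k := 84) hc hm hM (by norm_num) (by norm_num)
  replace hm := hM
  replace hc : 502 ≤ Nat.count Nat.Prime 3584 := le_count_prime_of_le_coprimeCount 13 hc (by decide +kernel)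
  rcases le_or_gt m 502 with hM | hM
  · exact nth_prime_le_of_le_count (k := 87) hc hm hM (by norm_num) (by norm_num)
  replace hm := hM
  replace hc : 602 ≤ Nat.count Nat.Prime 4424 := le_count_prime_of_le_coprimeCount 13 hc (by decide +kernel)
  rcases le_or_gt m 602 with hM | hM
  · exact nth_prime_le_of_le_count (k := 89) hc hm hM (by norm_num) (by norm_num)
  replace hm := hM
  replace hc : 725 ≤ Nat.count Nat.Prime 5484 := le_count_prime_of_le_coprimeCount 13 hc (by decide +kernel)
  rcases le_or_gt m 725 with hM | hM
  · exact nth_prime_le_of_le_count (k := 92) hc hm hM (by norm_num) (by norm_num)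
  replace hm := hM
  replace hc : 879 ≤ Nat.count Nat.Prime 6830 := le_count_prime_of_le_coprimeCount 13 hc (by decide +kernel)
  rcases le_or_gt m 879 with hM | hM
  · exact nth_prime_le_of_le_count (k := 95) hc hm hM (by norm_num) (by norm_num)
  replace hm := hM
  replace hc : 1057 ≤ Nat.count Nat.Prime 8448 := le_count_prime_of_le_coprimeCount 13 hc (by decide +kernel)
  rcases le_or_gt m 1057 with hM | hM
  · exact nth_prime_le_of_le_count (k := 97) hc hm hM (by norm_num) (by norm_num)
  replace hm := hM
  replace hc : 1281 ≤ Nat.count Nat.Prime 10464 := le_count_prime_of_le_coprimeCount 13 hc (by decide +kernel)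
  rcases le_or_gt m 1281 with hM | hM
  · exact nth_prime_le_of_le_count (k := 100) hc hm hM (by norm_num) (by norm_num)
  replace hm := hM
  replace hc : 1556 ≤ Nat.count Nat.Prime 13064 := le_count_prime_of_le_coprimeCount 13 hc (by decide +kernel)
  rcases le_or_gt m 1556 with hM | hM
  · exact nth_prime_le_of_le_count (k := 103) hc hm hM (by norm_num) (by norm_num)
  replace hm := hM
  replace hc : 1895 ≤ Nat.count Nat.Prime 16340 := le_count_prime_of_le_coprimeCount 13 hc (by decide +kernel)
  rcases le_or_gt m 1895 with hM | hM
  · exact nth_prime_le_of_le_count (k := 106) hc hm hM (by norm_num) (by norm_num)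
  replace hm := hM
  replace hc : 2291 ≤ Nat.count Nat.Prime 20270 := le_count_prime_of_le_coprimeCount 13 hc (by decide +kernel)
  rcases le_or_gt m 2291 with hM | hM
  · exact nth_prime_le_of_le_count (k := 108) hc hm hM (by norm_num) (by norm_num)
  replace hm := hM
  replace hc : 2781 ≤ Nat.count Nat.Prime 25190 := le_count_prime_of_le_coprimeCount 13 hc (by decide +kernel)
  rcases le_or_gt m 2781 with hM | hM
  · exact nth_prime_le_of_le_count (k := 111) hc hm hM (by norm_num) (by norm_num)
  replace hm := hM
  replace hc : 3000 ≤ Nat.count Nat.Prime 27450 := le_count_prime_of_le_coprimeCount 13 hc (by decide +kernel)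
  exact nth_prime_le_of_le_count (k := 114) hc hm hm' (by norm_num) (by norm_num)

theorem sum_vonMangoldt_mul_div (N : ℕ) :
    ∀ n ≤ N, ∑ d ∈ Finset.Ioc 0 N, ArithmeticFunction.vonMangoldt d * ((n / d : ℕ) : ℝ) =
      Real.log n.factorial := by
  intro n
  induction n with
  | zero => simp
  | succ n ih =>
    intro hn
    rw [Nat.factorial_succ, Nat.cast_mul, Real.log_mul (by positivity) (by positivity),
      ← ih (by omega), ← ArithmeticFunction.vonMangoldt_sum]
    have hsub : (n + 1).divisors = {d ∈ Finset.Ioc 0 N | d ∣ n + 1} := by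
      ext d
      simp only [Nat.mem_divisors, Finset.mem_filter, Finset.mem_Ioc]
      constructor
      · rintro ⟨hd, -⟩
        exact ⟨⟨Nat.pos_of_dvd_of_pos hd (by omega), (Nat.le_of_dvd (by omega) hd).trans hn⟩, hd⟩
      · rintro ⟨-, hd⟩
        exact ⟨hd, by omega⟩
    rw [hsub, Finset.sum_filter, ← Finset.sum_add_distrib]
    refine Finset.sum_congr rfl fun d _ ↦ ?_
    rw [Nat.succ_div]
    split_ifs <;> push_cast <;> ring

theorem log_factorial_le_add_psi (n : ℕ) :
    Real.log (30 * n).factorial + Real.log n.factorial ≤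
      Chebyshev.psi (30 * n : ℕ) + Real.log (15 * n).factorial + Real.log (10 * n).factorial +
        Real.log (6 * n).factorial := by
  rw [← sum_vonMangoldt_mul_div (30 * n) (30 * n) le_rfl,
    ← sum_vonMangoldt_mul_div (30 * n) n (by omega),
    ← sum_vonMangoldt_mul_div (30 * n) (15 * n) (by omega),
    ← sum_vonMangoldt_mul_div (30 * n) (10 * n) (by omega),
    ← sum_vonMangoldt_mul_div (30 * n) (6 * n) (by omega), Chebyshev.psi, Nat.floor_natCast,
    ← Finset.sum_add_distrib, ← Finset.sum_add_distrib, ← Finset.sum_add_distrib,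
    ← Finset.sum_add_distrib]
  refine Finset.sum_le_sum fun d _ ↦ ?_
  have key : 30 * n / d + n / d ≤ 1 + 15 * n / d + 10 * n / d + 6 * n / d := by
    have h1 : n / d = 30 * n / d / 30 := by
      rw [Nat.div_div_eq_div_mul, mul_comm d, Nat.mul_div_mul_left _ _ (by norm_num)]
    have h2 : 15 * n / d = 30 * n / d / 2 := by
      rw [Nat.div_div_eq_div_mul, mul_comm d, show 30 * n = 2 * (15 * n) by ring,
        Nat.mul_div_mul_left _ _ (by norm_num)]
    have h3 : 10 * n / d = 30 * n / d / 3 := by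
      rw [Nat.div_div_eq_div_mul, mul_comm d, show 30 * n = 3 * (10 * n) by ring,
        Nat.mul_div_mul_left _ _ (by norm_num)]
    have h5 : 6 * n / d = 30 * n / d / 5 := by
      rw [Nat.div_div_eq_div_mul, mul_comm d, show 30 * n = 5 * (6 * n) by ring,
        Nat.mul_div_mul_left _ _ (by norm_num)]
    omega
  have key' : ((30 * n / d : ℕ) : ℝ) + (n / d : ℕ) ≤
      1 + (15 * n / d : ℕ) + (10 * n / d : ℕ) + (6 * n / d : ℕ) := by exact_mod_cast key
  have := mul_le_mul_of_nonneg_left key' (ArithmeticFunction.vonMangoldt_nonneg (n := d))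
  linarith

theorem log_factorial_le_stirling {n : ℕ} (hn : n ≠ 0) :
    Real.log n.factorial ≤ n * Real.log n - n + 1 + Real.log n / 2 := by
  obtain ⟨k, rfl⟩ := Nat.exists_eq_succ_of_ne_zero hn
  have h := Stirling.stirlingSeq'_antitone (Nat.zero_le k)
  simp only [Function.comp] at h
  have hlog := Real.log_le_log (Stirling.stirlingSeq'_pos k) h
  rw [Nat.succ_eq_add_one, Stirling.log_stirlingSeq_formula, zero_add, Stirling.stirlingSeq_one,
    Real.log_mul (by norm_num) (by positivity), Real.log_div (by positivity) (by positivity),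
    Real.log_exp, Real.log_div (by positivity) (by positivity), Real.log_exp,
    Real.log_sqrt (by norm_num)] at hlog
  rw [Nat.succ_eq_add_one]
  linarith

theorem mul_sub_log_le_psi {n : ℕ} (hn : n ≠ 0) :
    27.638 * n - Real.log n / 2 - 3 ≤ Chebyshev.psi (30 * n : ℕ) := by
  have hn0 : (n : ℝ) ≠ 0 := by exact_mod_cast hn
  have hmain := log_factorial_le_add_psi n
  have l30 := Stirling.le_log_factorial_stirling (n := 30 * n) (by omega)
  have l1 := Stirling.le_log_factorial_stirling hn
  have u15 := log_factorial_le_stirling (n := 15 * n) (by omega)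
  have u10 := log_factorial_le_stirling (n := 10 * n) (by omega)
  have u6 := log_factorial_le_stirling (n := 6 * n) (by omega)
  have e30 : Real.log 30 = Real.log 2 + Real.log 3 + Real.log 5 := by
    rw [← Real.log_mul (by norm_num) (by norm_num), ← Real.log_mul (by norm_num) (by norm_num)]
    norm_num
  have e15 : Real.log 15 = Real.log 3 + Real.log 5 := by
    rw [← Real.log_mul (by norm_num) (by norm_num)]
    norm_num
  have e10 : Real.log 10 = Real.log 2 + Real.log 5 := Real.log_ten_eq
  have e6 : Real.log 6 = Real.log 2 + Real.log 3 := by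
    rw [← Real.log_mul (by norm_num) (by norm_num)]
    norm_num
  push_cast at l30 u15 u10 u6
  rw [Real.log_mul (by norm_num) hn0, e30] at l30
  rw [Real.log_mul (by norm_num) hn0, e15] at u15
  rw [Real.log_mul (by norm_num) hn0, e10] at u10
  rw [Real.log_mul (by norm_num) hn0, e6] at u6
  have hconst : (27.638 : ℝ) ≤ 14 * Real.log 2 + 9 * Real.log 3 + 5 * Real.log 5 := by
    linarith [Real.log_two_gt_d9, Real.log_three_gt_d9, Real.log_five_gt_d9]
  have hmul := mul_le_mul_of_nonneg_left hconst (Nat.cast_nonneg (α := ℝ) n)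
  have h2 := Real.log_two_lt_d9
  have h3 := Real.log_three_lt_d9
  have h5 := Real.log_five_lt_d9
  have h2π : (1.75 : ℝ) ≤ Real.log (2 * Real.pi) := by
    have : Real.log 6 ≤ Real.log (2 * Real.pi) :=
      Real.log_le_log (by norm_num) (by linarith [Real.pi_gt_three])
    linarith [Real.log_two_gt_d9, Real.log_three_gt_d9]
  linarith

theorem nth_prime_le_of_three_thousand_le {m : ℕ} (hm : 3000 ≤ m) :
    (Nat.nth Nat.Prime (m - 1) : ℝ) ≤ 10 / 7 * (m * Real.log m) := by
  have hmR : (3000 : ℝ) ≤ m := by exact_mod_cast hm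
  set L := Real.log m with hL
  have hL8 : 8 ≤ L := by
    rw [hL, Real.le_log_iff_exp_le (by linarith)]
    have h : Real.exp 8 = Real.exp 1 ^ 8 := by rw [← Real.exp_nat_mul]; norm_num
    have := pow_le_pow_left₀ (Real.exp_pos 1).le Real.exp_one_lt_d9.le 8
    rw [h]
    refine this.trans (le_trans ?_ hmR)
    norm_num
  set y := 10 / 7 * (m * L) with hy
  have hmL : 24000 ≤ m * L := by nlinarith
  set n := ⌊y / 30⌋₊ with hn
  have hny : (n : ℝ) ≤ y / 30 := Nat.floor_le (by linarith)
  have hyn : y / 30 - 1 < n := Nat.sub_one_lt_floor _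
  have hnpos : (0 : ℝ) < n := by linarith
  have hn0 : n ≠ 0 := by exact_mod_cast hnpos.ne'
  have hlogy : Real.log y ≤ 1.5081 + 1.125 * L := by
    rw [hy, Real.log_mul (by norm_num) (by linarith), Real.log_mul (by linarith) (by linarith),
      ← hL]
    have h1 := Real.log_le_sub_one_of_pos (show (0 : ℝ) < 10 / 7 by norm_num)
    have h2 := Real.log_le_sub_one_of_pos (show (0 : ℝ) < L / 8 by linarith)
    rw [Real.log_div (by linarith) (by norm_num), show (8 : ℝ) = 2 ^ 3 by norm_num,
      Real.log_pow] at h2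
    have := Real.log_two_lt_d9
    push_cast at h2
    linarith
  have hcount : m - 1 < Nat.count Nat.Prime (30 * n + 1) := by
    by_contra hcon
    have hpi : (Nat.primeCounting (30 * n) : ℝ) ≤ m := by
      have : Nat.primeCounting (30 * n) ≤ m - 1 := not_lt.mp hcon
      exact_mod_cast this.trans (Nat.sub_le m 1)
    have h1 := mul_sub_log_le_psi hn0
    have h2 := Chebyshev.psi_le_primeCounting_mul_log (30 * n)
    have h30n : ((30 * n : ℕ) : ℝ) ≤ y := by push_cast; linarith
    have hlog30 : Real.log ((30 * n : ℕ) : ℝ) ≤ Real.log y :=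
      Real.log_le_log (by push_cast; linarith) h30n
    have hlogn : Real.log n ≤ Real.log y := Real.log_le_log hnpos (by linarith)
    have h3 : (Nat.primeCounting (30 * n) : ℝ) * Real.log ((30 * n : ℕ) : ℝ) ≤
        m * (1.5081 + 1.125 * L) :=
      mul_le_mul hpi (hlog30.trans hlogy) (Real.log_natCast_nonneg _) (Nat.cast_nonneg m)
    have h4 := h1.trans (h2.trans h3)
    nlinarith
  have hlt := Nat.nth_lt_of_lt_count hcount
  have : (Nat.nth Nat.Prime (m - 1) : ℝ) ≤ 30 * n := by exact_mod_cast Nat.lt_succ_iff.mp hlt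
  linarith

theorem nthPrime_le {m : ℕ} (hm : 6 ≤ m) : (nthPrime m : ℝ) ≤ 10 / 7 * (m * Real.log m) := by
  rcases le_total m 3000 with h | h
  · exact nth_prime_le_of_le_three_thousand hm h
  · exact nth_prime_le_of_three_thousand_le h

theorem nthPrime_pos (n : ℕ) : 0 < nthPrime n := (Nat.prime_nth_prime _).pos

theorem add_one_rpow_sub_rpow_le {s : ℝ} (hs₀ : 0 < s) (hs₁ : s ≤ 1) {a : ℝ} (ha : 0 < a) :
    ((a + 1) ^ s - a ^ s) / s ≤ a ^ (s - 1) := by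
  have hb := rpow_one_add_le_one_add_mul_self (s := 1 / a) (by linarith [one_div_pos.mpr ha])
    hs₀.le hs₁
  have hsplit : (a + 1) ^ s = a ^ s * (1 + 1 / a) ^ s := by
    rw [← Real.mul_rpow ha.le (by positivity)]
    congr 1
    field_simp
  rw [div_le_iff₀ hs₀, hsplit, Real.rpow_sub_one ha.ne']
  have := mul_le_mul_of_nonneg_left hb (Real.rpow_nonneg ha.le s)
  calc _ ≤ a ^ s * (1 + s * (1 / a)) - a ^ s := by linarith
    _ = _ := by ring

theorem rpow_sub_rpow_div_le_sum {s : ℝ} (hs₀ : 0 < s) (hs₁ : s ≤ 1) {a N : ℕ} (ha : 0 < a)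
    (haN : a ≤ N) :
    (((N + 1 : ℕ) : ℝ) ^ s - (a : ℝ) ^ s) / s ≤ ∑ n ∈ Finset.Icc a N, (n : ℝ) ^ (s - 1) := by
  induction N, haN using Nat.le_induction with
  | base =>
    simpa using add_one_rpow_sub_rpow_le hs₀ hs₁ (a := (a : ℝ)) (by exact_mod_cast ha)
  | succ N haN ih =>
    rw [Finset.sum_Icc_succ_top (by omega)]
    have h := add_one_rpow_sub_rpow_le hs₀ hs₁ (a := ((N + 1 : ℕ) : ℝ)) (by positivity)
    rw [sub_div] at h ih ⊢
    rw [Nat.cast_succ (N + 1)]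
    linarith

theorem rpow_neg_nthPrime_ge {t : ℝ} (ht₀ : 0 < t) (ht₁ : t ≤ 1) {x : ℝ} {n : ℕ} (hn : 6 ≤ n)
    (hnx : (n : ℝ) ≤ x) :
    7 / 10 * (Real.log x ^ t)⁻¹ * (n : ℝ) ^ (-t) ≤ (nthPrime n : ℝ) ^ (-t) := by
  have hn6 : (6 : ℝ) ≤ n := by exact_mod_cast hn
  have hlogx : 0 < Real.log x := Real.log_pos (by linarith)
  have hp : (nthPrime n : ℝ) ≤ 10 / 7 * (n * Real.log x) := by
    refine (nthPrime_le hn).trans ?_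
    gcongr
  have h7 : (7 / 10 : ℝ) ≤ (10 / 7 : ℝ) ^ (-t) := by
    rw [Real.rpow_neg (by norm_num), ← Real.inv_rpow (by norm_num)]
    calc (7 / 10 : ℝ) = ((10 / 7 : ℝ)⁻¹) ^ (1 : ℝ) := by norm_num
      _ ≤ _ := Real.rpow_le_rpow_of_exponent_ge (by norm_num) (by norm_num) ht₁
  calc 7 / 10 * (Real.log x ^ t)⁻¹ * (n : ℝ) ^ (-t)
      ≤ (10 / 7 : ℝ) ^ (-t) * (Real.log x ^ t)⁻¹ * (n : ℝ) ^ (-t) := by gcongr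
    _ = (10 / 7 * (n * Real.log x)) ^ (-t) := by
      rw [Real.mul_rpow (by norm_num) (by positivity), Real.mul_rpow (by positivity) hlogx.le,
        Real.rpow_neg hlogx.le]
      ring
    _ ≤ _ := Real.rpow_le_rpow_of_nonpos (by exact_mod_cast nthPrime_pos n) hp (by linarith)

theorem sum_reciprocal_prime_powers_lower_bound
    (t x : ℝ) (ht₁ : 1 / 2 < t) (ht₂ : t < 1) (hx : (6 : ℝ) ≤ x) :
    7 * (x ^ (1 - t) - (6 : ℝ) ^ (1 - t)) / (10 * (1 - t) * Real.log x ^ t) <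
      ∑ n ∈ Finset.Icc 1 ⌊x⌋₊, (nthPrime n : ℝ) ^ (-t) := by
  have hs : 0 < 1 - t := by linarith
  have hlogx : 0 < Real.log x := Real.log_pos (by linarith)
  have hN : 6 ≤ ⌊x⌋₊ := Nat.le_floor (by exact_mod_cast hx)
  have hC : 0 ≤ 7 / 10 * (Real.log x ^ t)⁻¹ := by positivity
  have hpow : x ^ (1 - t) ≤ ((⌊x⌋₊ + 1 : ℕ) : ℝ) ^ (1 - t) := by
    refine Real.rpow_le_rpow (by linarith) ?_ hs.le
    push_cast
    exact (Nat.lt_floor_add_one x).le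
  have hsum := rpow_sub_rpow_div_le_sum hs (by linarith) (by norm_num : 0 < 6) hN
  calc 7 * (x ^ (1 - t) - (6 : ℝ) ^ (1 - t)) / (10 * (1 - t) * Real.log x ^ t)
      = 7 / 10 * (Real.log x ^ t)⁻¹ * ((x ^ (1 - t) - (6 : ℝ) ^ (1 - t)) / (1 - t)) := by
        field_simp
    _ ≤ 7 / 10 * (Real.log x ^ t)⁻¹ * ∑ n ∈ Finset.Icc 6 ⌊x⌋₊, (n : ℝ) ^ (1 - t - 1) := by
        refine mul_le_mul_of_nonneg_left (le_trans ?_ hsum) hC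
        gcongr
        norm_num
    _ ≤ ∑ n ∈ Finset.Icc 6 ⌊x⌋₊, (nthPrime n : ℝ) ^ (-t) := by
        rw [Finset.mul_sum, show 1 - t - 1 = -t by ring]
        refine Finset.sum_le_sum fun n hn ↦ ?_
        rw [Finset.mem_Icc] at hn
        exact rpow_neg_nthPrime_ge (by linarith) ht₂.le hn.1
          ((Nat.le_floor_iff (by linarith)).mp hn.2)
    _ < ∑ n ∈ Finset.Icc 1 ⌊x⌋₊, (nthPrime n : ℝ) ^ (-t) := by
        have hpos (n : ℕ) : 0 < (nthPrime n : ℝ) ^ (-t) :=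
          Real.rpow_pos_of_pos (by exact_mod_cast nthPrime_pos n) _
        refine Finset.sum_lt_sum_of_subset (i := 1)
          (Finset.Icc_subset_Icc_left (by norm_num)) ?_ (by simp) (hpos 1)
          fun n _ _ ↦ (hpos n).le
        rw [Finset.mem_Icc]
        omega
end
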